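/- There exists ε₀ > 0 such that for every z ∈ U with 0 < ‖z‖ ≤ ε₀ and f(z) ≠ 0, the two vectors z and i•grad log f(z) are linearly independent over ℝ. (Consequently each member X_θ of the canonical pencil of f meets every sufficiently small sphere about the origin transversally: every holomorphic germ is d-regular.) -/

import Mathlib

/-- `grad log f (x) = grad f(x) / conj (f x)`, where `grad f(x)` is the Hermitian
gradient of `f` at `x`: the unique vector with `⟪grad f x, v⟫ = Df(x)(v)` for all `v`. -/
noncomputable def gradLog {n : ℕ} (f : EuclideanSpace ℂ (Fin n) → ℂ)
    (x : EuclideanSpace ℂ (Fin n)) : EuclideanSpace ℂ (Fin n) :=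
  ((starRingEnd ℂ) (f x))⁻¹ • gradient f x

/-!
If `z` and `i grad log f(z)` are dependent over the reals, then `Df(z) = i a f(z) ⟪z, ·⟫` for some
real `a`. With `z = τ u`, `‖u‖ = 1`, and `c = (1 - i a ‖z‖²) / (1 + i a ‖z‖²)`, a number of modulus
one, this reads `(1 + c) τ Df(τ u) = (1 - c) f(τ u) ⟪u, ·⟫`, which is holomorphic in `(τ, u, w, c)`
once `⟪u, ·⟫` is replaced by an independent covector `w`.

Suppose that such points, with `f(z) ≠ 0`, accumulate at the origin. By compactness some ultrafilter
of them converges in the space of tuples, to a point with `τ = 0`, `w(u) = 1` and `|c| = 1`. There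
is a formal curve through this limit along which the equation holds, while `τ` and `f(τ u)` do not
vanish (curve selection, by Weierstrass division and induction on the dimension). Comparing the
lowest order terms along the curve gives `(1 + c) ord f = (1 - c) ord τ` at the limit. The orders
are positive, so `c` is real with `|c| < 1`, a contradiction.
-/

open Filter Topology Metric Set
open scoped Real BoundedContinuousFunction PowerSeries

/-! ### Holomorphic functions near a point -/

section Parametric

variable {E G : Type*} [NormedAddCommGroup E] [NormedSpace ℂ E] [NormedAddCommGroup G]
  [NormedSpace ℂ G]

theorem norm_fderiv_sub_fderiv_le {f : E → G} {x y : E} {r ε : ℝ} (hr : 0 < r)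
    (hx : ∀ w ∈ ball 0 r, DifferentiableAt ℂ f (x + w))
    (hy : ∀ w ∈ ball 0 r, DifferentiableAt ℂ f (y + w))
    (hxy : ∀ w ∈ ball 0 r, ‖f (y + w) - f (x + w)‖ ≤ ε) :
    ‖fderiv ℂ f y - fderiv ℂ f x‖ ≤ 2 * ε / r := by
  have h0 : (0 : E) ∈ ball 0 r := mem_ball_self hr
  have hshift (y w : E) : DifferentiableAt ℂ f (y + w) →
      DifferentiableAt ℂ (fun w ↦ f (y + w)) w := (differentiableAt_comp_add_left y).2
  have hbound : ‖fderiv ℂ (fun w ↦ f (y + w) - f (x + w)) 0‖ ≤ 2 * ε / r := by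
    refine Complex.norm_fderiv_le_div_of_mapsTo_ball (fun w hw ↦ ?_) (fun w hw ↦ ?_) hr
    · exact ((hshift y w (hy w hw)).sub (hshift x w (hx w hw))).differentiableWithinAt
    · rw [mem_closedBall_iff_norm]
      linarith [norm_sub_le (f (y + w) - f (x + w)) (f (y + 0) - f (x + 0)), hxy w hw, hxy 0 h0]
  rwa [fderiv_fun_sub (hshift y 0 (hy 0 h0)) (hshift x 0 (hx 0 h0)), fderiv_comp_add_left,
    fderiv_comp_add_left, add_zero, add_zero] at hbound

theorem fderiv_apply_eq_smul_circleIntegral [CompleteSpace G] {f : E → G} {y v : E} {r : ℝ}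
    (hr : 0 < r) (hf : ∀ ζ ∈ closedBall (0 : ℂ) r, DifferentiableAt ℂ f (y + ζ • v)) :
    fderiv ℂ f y v =
      (2 * π * Complex.I)⁻¹ • ∮ ζ in C(0, r), (1 / (ζ - 0) ^ 2) • f (y + ζ • v) := by
  have hline : DifferentiableOn ℂ (fun ζ : ℂ ↦ f (y + ζ • v)) (closedBall 0 r) := fun ζ hζ ↦
    ((hf ζ hζ).comp ζ (by fun_prop)).differentiableWithinAt
  have hy : DifferentiableAt ℂ f y := by simpa using hf 0 (mem_closedBall_self hr.le)
  rw [hline.deriv_eq_smul_circleIntegral hr, inv_smul_smul₀ Complex.two_pi_I_ne_zero]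
  exact (hy.lineDeriv_eq_fderiv (v := v)).symm

theorem tendsto_add_smul_sub (x₀ : E) (s : ℂ) :
    Tendsto (fun p : E × ℂ ↦ x₀ + p.2 • (p.1 - x₀)) (𝓝 (x₀, s)) (𝓝 x₀) := by
  simpa using (show Continuous fun p : E × ℂ ↦ x₀ + p.2 • (p.1 - x₀) by fun_prop).tendsto (x₀, s)

variable [FiniteDimensional ℂ E]

theorem continuousAt_fderiv_of_eventually_differentiableAt {f : E → G} {x : E}
    (hf : ∀ᶠ z in 𝓝 x, DifferentiableAt ℂ f z) : ContinuousAt (fderiv ℂ f) x := by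
  have : ProperSpace E := FiniteDimensional.proper ℂ E
  obtain ⟨r, hr, hball⟩ := nhds_basis_closedBall.eventually_iff.1 hf.eventually_nhds
  have hdiff : ∀ w ∈ closedBall (0 : E) r, ∀ᶠ z in 𝓝 (x + w), DifferentiableAt ℂ f z :=
    fun w hw ↦ hball (by simpa using hw)
  rw [ContinuousAt, tendsto_iff_norm_sub_tendsto_zero, Metric.tendsto_nhds]
  intro ε hε
  have hclose : ∀ᶠ y in 𝓝 x, ∀ w ∈ closedBall (0 : E) r,
      DifferentiableAt ℂ f (y + w) ∧ ‖f (y + w) - f (x + w)‖ < ε * r / 4 := by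
    refine (isCompact_closedBall _ _).eventually_forall_of_forall_eventually fun w hw ↦ ?_
    have hadd : Tendsto (fun p : E × E ↦ p.1 + p.2) (𝓝 (x, w)) (𝓝 (x + w)) :=
      continuous_add.continuousAt
    have hadd' : Tendsto (fun p : E × E ↦ x + p.2) (𝓝 (x, w)) (𝓝 (x + w)) :=
      (continuous_const.add continuous_snd).continuousAt
    have hcont : ContinuousAt f (x + w) := (hdiff w hw).self_of_nhds.continuousAt
    have hsub := ((hcont.tendsto.comp hadd).sub (hcont.tendsto.comp hadd')).norm
    rw [sub_self, norm_zero] at hsub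
    exact (hadd.eventually (hdiff w hw)).and (hsub.eventually_lt_const (by positivity))
  filter_upwards [hclose] with y hy
  have hsub {w : E} (hw : w ∈ ball 0 r) : w ∈ closedBall 0 r := ball_subset_closedBall hw
  rw [dist_zero_right, norm_norm]
  calc ‖fderiv ℂ f y - fderiv ℂ f x‖ ≤ 2 * (ε * r / 4) / r :=
        norm_fderiv_sub_fderiv_le hr (fun w hw ↦ (hdiff w (hsub hw)).self_of_nhds)
          (fun w hw ↦ (hy w (hsub hw)).1) fun w hw ↦ (hy w (hsub hw)).2.le
    _ = ε / 2 := by field_simp; norm_num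
    _ < ε := half_lt_self hε

theorem differentiableAt_intervalIntegral_of_eventually {Φ : E × ℂ → G} {x₀ : E}
    {γ ρ : ℝ → ℂ} {a b : ℝ} (hγ : Continuous γ) (hρ : Continuous ρ)
    (hΦ : ∀ t ∈ uIcc a b, ∀ᶠ p in 𝓝 (x₀, γ t), DifferentiableAt ℂ Φ p) :
    DifferentiableAt ℂ (fun x ↦ ∫ t in a..b, ρ t • Φ (x, γ t)) x₀ := by
  set F' : E → ℝ → E →L[ℂ] G :=
    fun x t ↦ ρ t • (fderiv ℂ Φ (x, γ t)).comp (ContinuousLinearMap.inl ℂ E ℂ)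
  have htend (t : ℝ) : Tendsto (fun q : E × ℝ ↦ (q.1, γ q.2)) (𝓝 (x₀, t)) (𝓝 (x₀, γ t)) :=
    (continuous_fst.prodMk (hγ.comp continuous_snd)).continuousAt
  have hF'cont : ∀ t ∈ uIcc a b, ContinuousAt (fun q : E × ℝ ↦ F' q.1 q.2) (x₀, t) := by
    intro t ht
    refine (hρ.comp continuous_snd).continuousAt.smul (ContinuousAt.clm_comp ?_ continuousAt_const)
    exact ContinuousAt.comp (f := fun q : E × ℝ ↦ (q.1, γ q.2))
      (continuousAt_fderiv_of_eventually_differentiableAt (hΦ t ht)) (htend t)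
  have hF'on : ContinuousOn (F' x₀) (uIcc a b) := fun t ht ↦
    (ContinuousAt.comp (f := fun t : ℝ ↦ (x₀, t)) (hF'cont t ht)
      (by fun_prop)).continuousWithinAt
  obtain ⟨M, hM⟩ := isCompact_uIcc.exists_bound_of_continuousOn hF'on
  have hnear : ∀ᶠ x in 𝓝 x₀, ∀ t ∈ uIcc a b, DifferentiableAt ℂ Φ (x, γ t) ∧ ‖F' x t‖ < M + 1 :=
    isCompact_uIcc.eventually_forall_of_forall_eventually fun t ht ↦
      ((htend t).eventually (hΦ t ht)).and <|
        (hF'cont t ht).norm.eventually_lt_const ((hM t ht).trans_lt (lt_add_one M))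
  have hFon : ∀ᶠ x in 𝓝 x₀, ContinuousOn (fun t ↦ ρ t • Φ (x, γ t)) (uIcc a b) := by
    filter_upwards [hnear] with x hx t ht
    exact (hρ.continuousAt.smul (ContinuousAt.comp (f := fun t ↦ (x, γ t)) (hx t ht).1.continuousAt
      (by fun_prop))).continuousWithinAt
  refine (intervalIntegral.hasFDerivAt_integral_of_dominated_of_fderiv_le (F' := F')
    (bound := fun _ ↦ M + 1) hnear ?_ hFon.self_of_nhds.intervalIntegrable ?_ ?_
    intervalIntegrable_const ?_).differentiableAt
  · filter_upwards [hFon] with x hx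
    exact (hx.mono uIoc_subset_uIcc).aestronglyMeasurable measurableSet_uIoc
  · exact (hF'on.mono uIoc_subset_uIcc).aestronglyMeasurable measurableSet_uIoc
  · exact Eventually.of_forall fun t ht x hx ↦ (hx t (uIoc_subset_uIcc ht)).2.le
  · refine Eventually.of_forall fun t ht x hx ↦ ?_
    exact (HasFDerivAt.comp x (hx t (uIoc_subset_uIcc ht)).1.hasFDerivAt
      (hasFDerivAt_prodMk_left x (γ t))).const_smul (ρ t)

theorem eventually_differentiableAt_intervalIntegral {Φ : E × ℂ → G} {x₀ : E}
    {γ ρ : ℝ → ℂ} {a b : ℝ} (hγ : Continuous γ) (hρ : Continuous ρ)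
    (hΦ : ∀ t ∈ uIcc a b, ∀ᶠ p in 𝓝 (x₀, γ t), DifferentiableAt ℂ Φ p) :
    ∀ᶠ x in 𝓝 x₀, DifferentiableAt ℂ (fun x ↦ ∫ t in a..b, ρ t • Φ (x, γ t)) x := by
  have hnear : ∀ᶠ x in 𝓝 x₀, ∀ t ∈ uIcc a b, ∀ᶠ p in 𝓝 (x, γ t), DifferentiableAt ℂ Φ p :=
    isCompact_uIcc.eventually_forall_of_forall_eventually fun t ht ↦
      ((continuous_fst.prodMk (hγ.comp continuous_snd)).tendsto (x₀, t)).eventually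
        (hΦ t ht).eventually_nhds
  exact hnear.mono fun x hx ↦ differentiableAt_intervalIntegral_of_eventually hγ hρ hx

theorem eventually_differentiableAt_circleIntegral {Φ : E × ℂ → G} {x₀ : E} {c : ℂ} {R : ℝ}
    (hR : 0 ≤ R) (hΦ : ∀ ζ ∈ sphere c R, ∀ᶠ p in 𝓝 (x₀, ζ), DifferentiableAt ℂ Φ p) :
    ∀ᶠ x in 𝓝 x₀, DifferentiableAt ℂ (fun x ↦ ∮ ζ in C(c, R), Φ (x, ζ)) x :=
  eventually_differentiableAt_intervalIntegral (continuous_circleMap c R)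
    (by simp only [funext (deriv_circleMap c R)]; fun_prop)
    fun t _ ↦ hΦ _ (circleMap_mem_sphere c hR t)

theorem eventually_differentiableAt_fderiv_apply [CompleteSpace G] {f : E → G} {x : E}
    (hf : ∀ᶠ z in 𝓝 x, DifferentiableAt ℂ f z) (v : E) :
    ∀ᶠ z in 𝓝 x, DifferentiableAt ℂ (fun y ↦ fderiv ℂ f y v) z := by
  have hline : Tendsto (fun p : E × ℂ ↦ p.1 + p.2 • v) (𝓝 (x, 0)) (𝓝 x) := by
    simpa using (show Continuous fun p : E × ℂ ↦ p.1 + p.2 • v by fun_prop).tendsto (x, 0)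
  obtain ⟨s, hs, t, ht, hst⟩ := mem_nhds_prod_iff.1 (hline.eventually hf.eventually_nhds)
  obtain ⟨r, hr, hrt⟩ := nhds_basis_closedBall.mem_iff.1 ht
  have hdiff : ∀ y ∈ s, ∀ ζ ∈ closedBall (0 : ℂ) r,
      ∀ᶠ z in 𝓝 (y + ζ • v), DifferentiableAt ℂ f z :=
    fun y hy ζ hζ ↦ hst (mk_mem_prod hy (hrt hζ))
  have hintegrand : ∀ ζ ∈ sphere (0 : ℂ) r, ∀ᶠ p in 𝓝 (x, ζ),
      DifferentiableAt ℂ (fun p : E × ℂ ↦ (1 / (p.2 - 0) ^ 2) • f (p.1 + p.2 • v)) p := by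
    intro ζ hζ
    have hne : ∀ᶠ p : E × ℂ in 𝓝 (x, ζ), p.2 ≠ 0 :=
      continuous_snd.continuousAt.eventually_ne (ne_of_mem_sphere hζ hr.ne')
    have hf' : ∀ᶠ p : E × ℂ in 𝓝 (x, ζ), DifferentiableAt ℂ f (p.1 + p.2 • v) :=
      (show Continuous fun p : E × ℂ ↦ p.1 + p.2 • v by fun_prop).continuousAt.eventually
        (hdiff x (mem_of_mem_nhds hs) ζ (sphere_subset_closedBall hζ))
    filter_upwards [hne, hf'] with p hp hfp
    refine DifferentiableAt.fun_smul ?_ (hfp.comp p (by fun_prop))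
    have : (p.2 - 0) ^ 2 ≠ 0 := by simpa using hp
    fun_prop (disch := assumption)
  filter_upwards [eventually_differentiableAt_circleIntegral hr.le hintegrand,
    eventually_mem_nhds_iff.2 hs] with z hz hzs
  refine (hz.const_smul (2 * π * Complex.I)⁻¹).congr_of_eventuallyEq ?_
  filter_upwards [hzs] with y hy using
    fderiv_apply_eq_smul_circleIntegral hr fun ζ hζ ↦ (hdiff y hy ζ hζ).self_of_nhds

theorem eventually_sub_eq_integral_fderiv [CompleteSpace G] {f : E → G} {x₀ : E}
    (hf : ∀ᶠ z in 𝓝 x₀, DifferentiableAt ℂ f z) : ∀ᶠ x in 𝓝 x₀,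
      ContinuousOn (fun t : ℝ ↦ fderiv ℂ f (x₀ + (t : ℂ) • (x - x₀))) (uIcc 0 1) ∧
      f x - f x₀ = ∫ t in (0 : ℝ)..1, fderiv ℂ f (x₀ + (t : ℂ) • (x - x₀)) (x - x₀) := by
  have hpath (x : E) : Continuous fun t : ℝ ↦ x₀ + (t : ℂ) • (x - x₀) := by fun_prop
  have hofReal (t : ℝ) : Tendsto (fun p : E × ℝ ↦ (p.1, (p.2 : ℂ))) (𝓝 (x₀, t)) (𝓝 (x₀, t)) :=
    (continuous_fst.prodMk (Complex.continuous_ofReal.comp continuous_snd)).tendsto (x₀, t)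
  have hseg : ∀ᶠ x in 𝓝 x₀, ∀ t ∈ uIcc (0 : ℝ) 1,
      ∀ᶠ z in 𝓝 (x₀ + (t : ℂ) • (x - x₀)), DifferentiableAt ℂ f z :=
    isCompact_uIcc.eventually_forall_of_forall_eventually fun t _ ↦
      (hofReal t).eventually <| (tendsto_add_smul_sub x₀ (t : ℂ)).eventually hf.eventually_nhds
  filter_upwards [hseg] with x hx
  have hcont : ContinuousOn (fun t : ℝ ↦ fderiv ℂ f (x₀ + (t : ℂ) • (x - x₀))) (uIcc 0 1) :=
    fun t ht ↦ (ContinuousAt.comp (f := fun t : ℝ ↦ x₀ + (t : ℂ) • (x - x₀))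
      (continuousAt_fderiv_of_eventually_differentiableAt (hx t ht))
      (hpath x).continuousAt).continuousWithinAt
  refine ⟨hcont, ?_⟩
  have hderiv : ∀ t ∈ uIcc (0 : ℝ) 1, HasDerivAt (fun t : ℝ ↦ f (x₀ + (t : ℂ) • (x - x₀)))
      (fderiv ℂ f (x₀ + (t : ℂ) • (x - x₀)) (x - x₀)) t := by
    intro t ht
    have hline : HasDerivAt (fun t : ℝ ↦ x₀ + (t : ℂ) • (x - x₀)) (x - x₀) t := by
      simpa using ((Complex.ofRealCLM.hasDerivAt (x := t)).smul_const (x - x₀)).const_add x₀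
    exact ((hx t ht).self_of_nhds.hasFDerivAt.restrictScalars ℝ).comp_hasDerivAt t hline
  rw [intervalIntegral.integral_eq_sub_of_hasDerivAt hderiv
    (hcont.clm_apply continuousOn_const).intervalIntegrable]
  simp

end Parametric

section HolomorphicAt

variable {E E' : Type*} [NormedAddCommGroup E] [NormedSpace ℂ E]
  [NormedAddCommGroup E'] [NormedSpace ℂ E']

/-- The algebra of functions which are holomorphic near `x₀`. Its elements are functions rather
than germs, so that they can be evaluated at points other than `x₀`. -/
def holomorphicAt (x₀ : E) : Subalgebra ℂ (E → ℂ) where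
  carrier := {F | ∀ᶠ x in 𝓝 x₀, DifferentiableAt ℂ F x}
  mul_mem' hF hG := (hF.and hG).mono fun _ h ↦ h.1.mul h.2
  add_mem' hF hG := (hF.and hG).mono fun _ h ↦ h.1.add h.2
  algebraMap_mem' c := Eventually.of_forall fun _ ↦ differentiableAt_const c

namespace holomorphicAt

instance {x₀ : E} : CoeFun (holomorphicAt x₀) fun _ ↦ E → ℂ := ⟨Subtype.val⟩

/-- Precomposition with a holomorphic map. -/
noncomputable def comp {x₀ : E} {y₀ : E'} (g : E → E')
    (hg : ∀ᶠ x in 𝓝 x₀, DifferentiableAt ℂ g x) (hgx : g x₀ = y₀) :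
    holomorphicAt y₀ →ₐ[ℂ] holomorphicAt x₀ :=
  AlgHom.codRestrict ((AlgHom.pi fun x ↦ Pi.evalAlgHom ℂ _ (g x)).comp (holomorphicAt y₀).val)
    _ fun F ↦ by
      have hF : ∀ᶠ x in 𝓝 x₀, DifferentiableAt ℂ (F : E' → ℂ) (g x) :=
        hg.self_of_nhds.continuousAt.eventually (hgx ▸ F.2)
      exact (hF.and hg).mono fun x h ↦ h.1.comp x h.2

@[simp]
theorem comp_apply {x₀ : E} {y₀ : E'} (g : E → E') (hg : ∀ᶠ x in 𝓝 x₀, DifferentiableAt ℂ g x)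
    (hgx : g x₀ = y₀) (F : holomorphicAt y₀) (x : E) :
    (comp g hg hgx F : E → ℂ) x = (F : E' → ℂ) (g x) := rfl

/-- A continuous linear functional as a holomorphic function. -/
noncomputable def ofCLM (x₀ : E) (l : E →L[ℂ] ℂ) : holomorphicAt x₀ :=
  ⟨l, Eventually.of_forall fun _ ↦ l.differentiableAt⟩

/-- Evaluation at the base point. -/
noncomputable def eval (x₀ : E) : holomorphicAt x₀ →ₐ[ℂ] ℂ :=
  (Pi.evalAlgHom ℂ _ x₀).comp (holomorphicAt x₀).val

variable [FiniteDimensional ℂ E] {x₀ : E}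

/-- The derivative of `F` in the direction `v`. -/
noncomputable def partialDeriv (v : E) (F : holomorphicAt x₀) : holomorphicAt x₀ :=
  ⟨fun x ↦ fderiv ℂ F x v, eventually_differentiableAt_fderiv_apply F.2 v⟩

theorem exists_eq_add_sum_coord_mul {ι : Type*} [Fintype ι] (b : Module.Basis ι ℂ E)
    (F : holomorphicAt x₀) : ∃ G : ι → holomorphicAt x₀, ∀ᶠ x in 𝓝 x₀,
      F x = F x₀ + ∑ i, b.coord i (x - x₀) * G i x := by
  have hdiff (i : ι) (t : ℝ) : ∀ᶠ p : E × ℂ in 𝓝 (x₀, (t : ℂ)), DifferentiableAt ℂ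
      (fun p : E × ℂ ↦ partialDeriv (b i) F (x₀ + p.2 • (p.1 - x₀))) p :=
    ((tendsto_add_smul_sub x₀ (t : ℂ)).eventually (partialDeriv (b i) F).2).mono fun p hp ↦
      hp.comp p (by fun_prop)
  refine ⟨fun i ↦ ⟨fun x ↦ ∫ t in (0 : ℝ)..1,
    (1 : ℂ) • partialDeriv (b i) F (x₀ + (t : ℂ) • (x - x₀)),
    eventually_differentiableAt_intervalIntegral
      Complex.continuous_ofReal continuous_const fun t _ ↦ hdiff i t⟩, ?_⟩
  filter_upwards [eventually_sub_eq_integral_fderiv F.2] with x ⟨hcont, hint⟩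
  have hexpand (t : ℝ) : fderiv ℂ (F : E → ℂ) (x₀ + (t : ℂ) • (x - x₀)) (x - x₀) =
      ∑ i, b.coord i (x - x₀) * partialDeriv (b i) F (x₀ + (t : ℂ) • (x - x₀)) := by
    generalize x₀ + (t : ℂ) • (x - x₀) = y
    conv_lhs => rw [← b.sum_repr (x - x₀)]
    simp only [map_sum, map_smul, smul_eq_mul, Module.Basis.coord_apply, partialDeriv]
  have hcont' (i : ι) : ContinuousOn
      (fun t : ℝ ↦ partialDeriv (b i) F (x₀ + (t : ℂ) • (x - x₀))) (uIcc 0 1) :=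
    hcont.clm_apply continuousOn_const
  rw [← sub_eq_iff_eq_add', hint]
  simp only [hexpand, one_smul]
  rw [intervalIntegral.integral_finsetSum fun i _ ↦ ((hcont' i).intervalIntegrable).const_mul _]
  simp only [intervalIntegral.integral_const_mul]

end holomorphicAt
end HolomorphicAt

/-! ### Weierstrass division -/

section CircleCalculus

variable {B : Type*} [NormedRing B] [NormedAlgebra ℂ B]

/-- The holomorphic functional calculus `φ ↦ φ(a)` given by Cauchy's formula on the circle of
radius `R` about the origin. -/
noncomputable def circleCalculus (R : ℝ) (φ : ℂ → ℂ) (a : B) : B :=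
  (2 * π * Complex.I)⁻¹ • ∮ ζ in C(0, R), φ ζ • resolvent a ζ

theorem circleCalculus_congr {R : ℝ} {φ ψ : ℂ → ℂ} {a : B} (hR : 0 ≤ R)
    (h : EqOn φ ψ (sphere 0 R)) : circleCalculus R φ a = circleCalculus R ψ a := by
  rw [circleCalculus, circleCalculus,
    circleIntegral.integral_congr hR fun ζ hζ ↦ congrArg (· • resolvent a ζ) (h hζ)]

variable [CompleteSpace B]

theorem eventually_differentiableAt_circleCalculus {E : Type*} [NormedAddCommGroup E]
    [NormedSpace ℂ E] [FiniteDimensional ℂ E] {Φ : E × ℂ → ℂ} {a : E → B} {x₀ : E} {R : ℝ}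
    (hR : 0 ≤ R) (hΦ : ∀ ζ ∈ sphere (0 : ℂ) R, ∀ᶠ p in 𝓝 (x₀, ζ), DifferentiableAt ℂ Φ p)
    (ha : ∀ᶠ x in 𝓝 x₀, DifferentiableAt ℂ a x) (haR : ‖a x₀‖ * ‖(1 : B)‖ < R) :
    ∀ᶠ x in 𝓝 x₀, DifferentiableAt ℂ (fun x ↦ circleCalculus R (fun ζ ↦ Φ (x, ζ)) (a x)) x := by
  refine (eventually_differentiableAt_circleIntegral
    (Φ := fun p : E × ℂ ↦ Φ p • resolvent (a p.1) p.2) hR fun ζ hζ ↦ ?_).mono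
    fun x hx ↦ hx.const_smul (2 * π * Complex.I)⁻¹
  have hfst : Tendsto Prod.fst (𝓝 (x₀, ζ)) (𝓝 x₀) := continuous_fst.tendsto (x₀, ζ)
  have hnorm : ∀ᶠ p : E × ℂ in 𝓝 (x₀, ζ), ‖a p.1‖ * ‖(1 : B)‖ < ‖p.2‖ := by
    refine ((ha.self_of_nhds.continuousAt.tendsto.comp hfst).norm.mul_const _).eventually_lt
      (continuous_snd.norm.tendsto (x₀, ζ)) ?_
    rwa [mem_sphere_zero_iff_norm.1 hζ]
  filter_upwards [hΦ ζ hζ, hfst.eventually ha, hnorm] with p hΦp hap hp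
  have hsub : DifferentiableAt ℂ (fun p : E × ℂ ↦ algebraMap ℂ B p.2 - a p.1) p := by
    simp only [Algebra.algebraMap_eq_smul_one]
    exact (differentiableAt_snd.smul_const _).sub (hap.comp p differentiableAt_fst)
  exact hΦp.smul ((differentiableAt_inverse
    (spectrum.mem_resolventSet_of_norm_lt_mul hp)).comp p hsub)

variable {a : B} {R : ℝ} {φ : ℂ → ℂ}

theorem continuousOn_resolvent_sphere (haR : ‖a‖ * ‖(1 : B)‖ < R) :
    ContinuousOn (resolvent a) (sphere (0 : ℂ) R) := fun ζ hζ ↦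
  (spectrum.hasDerivAt_resolvent_const_left (spectrum.mem_resolventSet_of_norm_lt_mul <| by
    rwa [mem_sphere_zero_iff_norm.1 hζ])).continuousAt.continuousWithinAt

theorem sub_mul_resolvent {ζ : ℂ} (haζ : ‖a‖ * ‖(1 : B)‖ < ‖ζ‖) :
    (algebraMap ℂ B ζ - a) * resolvent a ζ = 1 :=
  Ring.mul_inverse_cancel _ (spectrum.mem_resolventSet_of_norm_lt_mul haζ)

theorem map_circleCalculus_of_forall_map_mul (m : B →L[ℂ] ℂ) {c : ℂ}
    (hm : ∀ b, m (a * b) = c * m b) (haR : ‖a‖ * ‖(1 : B)‖ < R) (hcR : ‖c‖ < R)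
    (hφ : DifferentiableOn ℂ φ (closedBall 0 R)) :
    m (circleCalculus R φ a) = φ c * m 1 := by
  have hR : 0 < R := (norm_nonneg c).trans_lt hcR
  have hres : ∀ ζ ∈ sphere (0 : ℂ) R, m (φ ζ • resolvent a ζ) = ((ζ - c)⁻¹ • φ ζ) • m 1 := by
    intro ζ hζ
    rw [mem_sphere_zero_iff_norm] at hζ
    have hne : ζ - c ≠ 0 := sub_ne_zero.2 fun h ↦ by rw [← h, hζ] at hcR; exact hcR.false
    have := congrArg m (sub_mul_resolvent (a := a) (haR.trans_eq hζ.symm))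
    rw [sub_mul, map_sub, hm, ← Algebra.smul_def, map_smul, smul_eq_mul, ← sub_mul] at this
    rw [map_smul, smul_eq_mul, smul_eq_mul, smul_eq_mul, ← this]
    field_simp
  have hint : CircleIntegrable (fun ζ ↦ φ ζ • resolvent a ζ) 0 R :=
    ((hφ.continuousOn.mono sphere_subset_closedBall).smul
      (continuousOn_resolvent_sphere haR)).circleIntegrable hR.le
  have hcauchy := (hφ.diffContOnCl_ball subset_rfl).two_pi_i_inv_smul_circleIntegral_sub_inv_smul
    (mem_ball_zero_iff.2 hcR)
  have hcomm : m (∮ ζ in C(0, R), φ ζ • resolvent a ζ) =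
      ∮ ζ in C(0, R), m (φ ζ • resolvent a ζ) := by
    simp only [circleIntegral]
    rw [← m.intervalIntegral_comp_comm hint.out]
    simp only [map_smul]
  rw [circleCalculus, map_smul, hcomm, circleIntegral.integral_congr hR.le hres,
    circleIntegral.integral_smul_const, ← smul_assoc, hcauchy, smul_eq_mul]

theorem circleCalculus_id_mul (hR : 0 ≤ R) (haR : ‖a‖ * ‖(1 : B)‖ < R)
    (hφ : DifferentiableOn ℂ φ (closedBall 0 R)) :
    circleCalculus R (fun ζ ↦ ζ * φ ζ) a = a * circleCalculus R φ a := by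
  have hφc : ContinuousOn φ (sphere 0 R) := hφ.continuousOn.mono sphere_subset_closedBall
  have hint : CircleIntegrable (fun ζ ↦ φ ζ • resolvent a ζ) 0 R :=
    (hφc.smul (continuousOn_resolvent_sphere haR)).circleIntegrable hR
  have hsplit : ∀ ζ ∈ sphere (0 : ℂ) R,
      (ζ * φ ζ) • resolvent a ζ = φ ζ • (1 : B) + a * (φ ζ • resolvent a ζ) := by
    intro ζ hζ
    have := sub_mul_resolvent (a := a) (haR.trans_eq (mem_sphere_zero_iff_norm.1 hζ).symm)
    rw [sub_mul, ← Algebra.smul_def, sub_eq_iff_eq_add] at this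
    rw [mul_comm, mul_smul, this, smul_add, mul_smul_comm]
  have hcomm : ∮ ζ in C(0, R), a * (φ ζ • resolvent a ζ) =
      a * ∮ ζ in C(0, R), φ ζ • resolvent a ζ := by
    simp only [circleIntegral, ← mul_smul_comm]
    exact (ContinuousLinearMap.mul ℂ B a).intervalIntegral_comp_comm hint.out
  have hcauchy : ∮ ζ in C(0, R), φ ζ • (1 : B) = 0 := by
    rw [circleIntegral.integral_smul_const,
      (hφ.diffContOnCl_ball subset_rfl).circleIntegral_eq_zero hR, zero_smul]
  rw [circleCalculus, circleIntegral.integral_congr hR hsplit,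
    circleIntegral.integral_add
      (f := fun ζ ↦ φ ζ • (1 : B)) (g := fun ζ ↦ a * (φ ζ • resolvent a ζ))
      ((hφc.smul continuousOn_const).circleIntegrable hR)
      ((continuousOn_const.mul (hφc.smul (continuousOn_resolvent_sphere haR))).circleIntegrable hR),
    hcauchy, zero_add, hcomm, circleCalculus, mul_smul_comm]

theorem circleCalculus_pow_mul (hR : 0 ≤ R) (haR : ‖a‖ * ‖(1 : B)‖ < R)
    (hφ : DifferentiableOn ℂ φ (closedBall 0 R)) (d : ℕ) :
    circleCalculus R (fun ζ ↦ ζ ^ d * φ ζ) a = a ^ d * circleCalculus R φ a := by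
  induction d with
  | zero => simp
  | succ d ih =>
    have := circleCalculus_id_mul (φ := fun ζ ↦ ζ ^ d * φ ζ) hR haR
      ((differentiableOn_pow d).mul hφ)
    simpa only [pow_succ', mul_assoc, ← ih] using this

theorem circleCalculus_zero (hR : 0 < R) (hφ : DifferentiableOn ℂ φ (closedBall 0 R)) :
    circleCalculus R φ (0 : B) = algebraMap ℂ B (φ 0) := by
  have hres : ∀ ζ ∈ sphere (0 : ℂ) R,
      φ ζ • resolvent (0 : B) ζ = ((ζ - 0)⁻¹ • φ ζ) • (1 : B) := by
    intro ζ hζ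
    have hζ0 : ζ ≠ 0 := ne_of_mem_sphere hζ hR.ne'
    have := sub_mul_resolvent (a := (0 : B)) (ζ := ζ) (by simpa using hζ0)
    rw [sub_zero, ← Algebra.smul_def] at this
    rw [← this, sub_zero, smul_smul, smul_eq_mul, mul_right_comm, inv_mul_cancel₀ hζ0, one_mul]
  rw [circleCalculus, circleIntegral.integral_congr hR.le hres, circleIntegral.integral_smul_const,
    ← smul_assoc, (hφ.diffContOnCl_ball subset_rfl).two_pi_i_inv_smul_circleIntegral_sub_inv_smul
      (mem_ball_self hR), Algebra.algebraMap_eq_smul_one]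

theorem eventually_isUnit_circleCalculus_smul (hR : 0 < R)
    (hφ : ∀ ζ ∈ closedBall 0 R, ∀ᶠ z in 𝓝 ζ, DifferentiableAt ℂ φ z) (hφ0 : φ 0 ≠ 0) (a : B) :
    ∀ᶠ ρ : ℂ in 𝓝 0, IsUnit (circleCalculus R φ (ρ • a)) := by
  have hcont : ContinuousAt (fun ρ : ℂ ↦ circleCalculus R φ (ρ • a)) 0 :=
    (eventually_differentiableAt_circleCalculus (Φ := fun p : ℂ × ℂ ↦ φ p.2) hR.le
      (fun ζ hζ ↦ ((continuous_snd.tendsto (0, ζ)).eventually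
        (hφ ζ (sphere_subset_closedBall hζ))).mono fun p hp ↦ hp.comp p differentiableAt_snd)
      (Eventually.of_forall fun ρ ↦ differentiableAt_id.smul_const a)
      (by simpa using hR)).self_of_nhds.continuousAt
  refine hcont.eventually_mem (Units.isOpen.mem_nhds ?_)
  rw [mem_ofPred_eq, zero_smul, circleCalculus_zero hR fun ζ hζ ↦
    (hφ ζ hζ).self_of_nhds.differentiableWithinAt]
  exact (isUnit_iff_ne_zero.2 hφ0).map (algebraMap ℂ B)

theorem isUnit_pow_mul_circleCalculus_smul {L S : B} (hLS : L * S = 1) {ψ : ℂ → ℂ} {ρ : ℂ} {d : ℕ}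
    (hR : 0 ≤ R) (hρ0 : ρ ≠ 0) (hρ : ‖ρ • S‖ * ‖(1 : B)‖ < R)
    (hφ : DifferentiableOn ℂ φ (closedBall 0 R)) (hψ : EqOn ψ (fun ζ ↦ ζ ^ d * φ ζ) (sphere 0 R))
    (hunit : IsUnit (circleCalculus R φ (ρ • S))) :
    IsUnit (L ^ d * circleCalculus R ψ (ρ • S)) := by
  rw [circleCalculus_congr hR hψ, circleCalculus_pow_mul hR hρ hφ, smul_pow, smul_mul_assoc,
    mul_smul_comm, ← mul_assoc, pow_mul_pow_eq_one d hLS, one_mul]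
  exact hunit.smul (Units.mk0 _ (pow_ne_zero d hρ0))

end CircleCalculus

namespace BoundedSeq

theorem norm_natRec_le (p : ℂ × (ℕ →ᵇ ℂ)) (n : ℕ) :
    ‖(Nat.rec p.1 (fun n _ ↦ p.2 n) n : ℂ)‖ ≤ ‖p‖ := by
  cases n with
  | zero => exact norm_fst_le p
  | succ n => exact (p.2.norm_coe_le_norm n).trans (norm_snd_le p)

/-- Prepending a term to a bounded sequence. -/
noncomputable def cons : ℂ × (ℕ →ᵇ ℂ) →L[ℂ] (ℕ →ᵇ ℂ) :=
  LinearMap.mkContinuous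
    { toFun := fun p ↦ .ofNormedAddCommGroupDiscrete (Nat.rec p.1 fun n _ ↦ p.2 n) ‖p‖
        (norm_natRec_le p)
      map_add' := fun p q ↦ by ext n; cases n <;> rfl
      map_smul' := fun c p ↦ by ext n; cases n <;> rfl }
    1 fun p ↦ by
      rw [one_mul]
      exact (BoundedContinuousFunction.norm_le (norm_nonneg p)).2 (norm_natRec_le p)

/-- The backward shift, which drops the first term. -/
noncomputable def tail : (ℕ →ᵇ ℂ) →L[ℂ] (ℕ →ᵇ ℂ) :=
  LinearMap.mkContinuous
    { toFun := fun v ↦ v.compContinuous ⟨Nat.succ, continuous_of_discreteTopology⟩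
      map_add' := fun _ _ ↦ rfl
      map_smul' := fun _ _ ↦ rfl }
    1 fun v ↦ by
      rw [one_mul]
      exact (BoundedContinuousFunction.norm_le (norm_nonneg v)).2 fun n ↦ v.norm_coe_le_norm _

/-- The forward shift, which corresponds to multiplication by the variable. -/
noncomputable def shift : (ℕ →ᵇ ℂ) →L[ℂ] (ℕ →ᵇ ℂ) := cons ∘L .inr ℂ ℂ _

theorem tail_cons (p : ℂ × (ℕ →ᵇ ℂ)) : tail (cons p) = p.2 := rfl

theorem cons_zero (p : ℂ × (ℕ →ᵇ ℂ)) : cons p 0 = p.1 := rfl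

theorem tail_mul_shift : tail * shift = 1 := rfl

theorem tail_pow_apply (d : ℕ) (v : ℕ →ᵇ ℂ) (n : ℕ) : (tail ^ d) v n = v (n + d) := by
  induction d generalizing v with
  | zero => rfl
  | succ d ih => rw [pow_succ, mul_apply_eq_comp, ih]; rfl

theorem summable_mul_pow (v : ℕ →ᵇ ℂ) {w : ℂ} (hw : ‖w‖ < 1) : Summable fun n ↦ v n * w ^ n :=
  .of_norm_bounded ((summable_geometric_of_lt_one (norm_nonneg w) hw).mul_left ‖v‖) fun n ↦ by
    rw [norm_mul, norm_pow]
    gcongr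
    exact v.norm_coe_le_norm n

/-- The value at `w` of the power series whose coefficients are a given bounded sequence. -/
noncomputable def powerSeriesEval {w : ℂ} (hw : ‖w‖ < 1) : (ℕ →ᵇ ℂ) →L[ℂ] ℂ :=
  LinearMap.mkContinuous
    { toFun := fun v ↦ ∑' n, v n * w ^ n
      map_add' := fun v v' ↦ by
        rw [← (summable_mul_pow v hw).tsum_add (summable_mul_pow v' hw)]
        simp only [BoundedContinuousFunction.add_apply, add_mul]
      map_smul' := fun c v ↦ by
        simp only [BoundedContinuousFunction.smul_apply, smul_eq_mul, mul_assoc, tsum_mul_left,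
          RingHom.id_apply] }
    (1 - ‖w‖)⁻¹ fun v ↦ by
      refine tsum_of_norm_bounded
        ((hasSum_geometric_of_lt_one (norm_nonneg w) hw).mul_right ‖v‖) fun n ↦ ?_
      rw [norm_mul, norm_pow, mul_comm]
      gcongr
      exact v.norm_coe_le_norm n

variable {w : ℂ} (hw : ‖w‖ < 1)

theorem powerSeriesEval_eq_sum_add (d : ℕ) (v : ℕ →ᵇ ℂ) : powerSeriesEval hw v =
    ∑ i ∈ Finset.range d, v i * w ^ i + w ^ d * powerSeriesEval hw ((tail ^ d) v) := by
  change ∑' n, v n * w ^ n = _ + w ^ d * ∑' n, (tail ^ d) v n * w ^ n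
  rw [← (summable_mul_pow v hw).sum_add_tsum_nat_add d, ← tsum_mul_left]
  exact congrArg _ (tsum_congr fun n ↦ by rw [tail_pow_apply, pow_add]; ring)

theorem powerSeriesEval_cons (p : ℂ × (ℕ →ᵇ ℂ)) :
    powerSeriesEval hw (cons p) = p.1 + w * powerSeriesEval hw p.2 := by
  simpa [cons_zero, tail_cons] using powerSeriesEval_eq_sum_add hw 1 (cons p)

theorem powerSeriesEval_circleCalculus_smul_shift {R : ℝ} {φ : ℂ → ℂ} {ρ : ℂ}
    (hρ : ‖ρ • shift‖ * ‖(1 : (ℕ →ᵇ ℂ) →L[ℂ] (ℕ →ᵇ ℂ))‖ < R) (hρw : ‖ρ * w‖ < R)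
    (hφ : DifferentiableOn ℂ φ (closedBall 0 R)) (v : ℕ →ᵇ ℂ) :
    powerSeriesEval hw (circleCalculus R φ (ρ • shift) v) =
      φ (ρ * w) * powerSeriesEval hw v :=
  map_circleCalculus_of_forall_map_mul
    ((powerSeriesEval hw).comp (ContinuousLinearMap.apply ℂ (ℕ →ᵇ ℂ) v))
    (fun b ↦ by
      change powerSeriesEval hw (ρ • cons (0, b v)) = ρ * w * powerSeriesEval hw (b v)
      rw [map_smul, powerSeriesEval_cons, zero_add, smul_eq_mul, mul_assoc]) hρ hρw hφ

end BoundedSeq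

section Division

open BoundedSeq

variable {E : Type*} [NormedAddCommGroup E] [NormedSpace ℂ E]

theorem eventually_exists_division {V : Type*} [NormedAddCommGroup V] [NormedSpace ℂ V]
    [CompleteSpace V] {L : V →L[ℂ] V} {M N : E → V →L[ℂ] V} {x₀ : E} (e : V)
    (hM : ∀ᶠ x in 𝓝 x₀, DifferentiableAt ℂ M x) (hN : ∀ᶠ x in 𝓝 x₀, DifferentiableAt ℂ N x)
    (hunit : IsUnit (L * M x₀)) :
    ∃ q r : E → V, ∀ᶠ x in 𝓝 x₀,
      DifferentiableAt ℂ r x ∧ N x e = M x (q x) + r x ∧ L (r x) = 0 := by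
  set q : E → V := fun x ↦ Ring.inverse (L * M x) (L (N x e)) with hq
  refine ⟨q, fun x ↦ N x e - M x (q x), ?_⟩
  have hnear : ∀ᶠ x in 𝓝 x₀, IsUnit (L * M x) :=
    (continuousAt_const.mul hM.self_of_nhds.continuousAt).eventually_mem
      (Units.isOpen.mem_nhds hunit)
  filter_upwards [hM, hN, hnear] with x hMx hNx hx
  have hqx : DifferentiableAt ℂ q x :=
    ((differentiableAt_inverse hx).comp x (hMx.const_mul L)).clm_apply
      (L.differentiableAt.comp x (hNx.clm_apply (differentiableAt_const e)))
  refine ⟨(hNx.clm_apply (differentiableAt_const e)).sub (hMx.clm_apply hqx),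
    (add_sub_cancel _ _).symm, ?_⟩
  have : (L * M x) (q x) = L (N x e) := by
    rw [hq, ← mul_apply_eq_comp, Ring.mul_inverse_cancel _ hx]; rfl
  rw [map_sub, ← this, sub_eq_zero]; rfl

variable {x₀ : E}

theorem eventually_differentiableOn_closedBall {H : E × ℂ → ℂ} {R : ℝ}
    (hH : ∀ ζ ∈ closedBall 0 R, ∀ᶠ p in 𝓝 (x₀, ζ), DifferentiableAt ℂ H p) :
    ∀ᶠ x in 𝓝 x₀, DifferentiableOn ℂ (fun ζ ↦ H (x, ζ)) (closedBall 0 R) :=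
  ((isCompact_closedBall (0 : ℂ) R).eventually_forall_of_forall_eventually
    (P := fun x ζ ↦ DifferentiableAt ℂ H (x, ζ)) hH).mono fun _ hx ζ hζ ↦
      ((hx ζ hζ).comp ζ (by fun_prop)).differentiableWithinAt

variable [FiniteDimensional ℂ E]

/- Convergent power series in the last variable are encoded by bounded sequences of coefficients, in
which the variable is rescaled by `ρ`. On these, multiplication by `H(x, ·)` is the operator
`circleCalculus R (H(x, ·)) (ρ • shift)`, and `tail ^ d` forgets the polynomials of degree `< d`. -/
theorem exists_sum_eq_of_isUnit {R : ℝ} {ρ : ℂ} {d : ℕ} {g F : E × ℂ → ℂ} (hρ0 : ρ ≠ 0)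
    (hρ : ‖ρ • shift‖ * ‖(1 : (ℕ →ᵇ ℂ) →L[ℂ] (ℕ →ᵇ ℂ))‖ < R)
    (hg : ∀ ζ ∈ closedBall 0 R, ∀ᶠ p in 𝓝 (x₀, ζ), DifferentiableAt ℂ g p)
    (hF : ∀ ζ ∈ closedBall 0 R, ∀ᶠ p in 𝓝 (x₀, ζ), DifferentiableAt ℂ F p)
    (hunit : IsUnit (tail ^ d * circleCalculus R (fun ζ ↦ g (x₀, ζ)) (ρ • shift))) :
    ∃ r : Fin d → holomorphicAt x₀,
      ∀ᶠ p in 𝓝 (x₀, (0 : ℂ)), g p = 0 → F p = ∑ i, r i p.1 * p.2 ^ (i : ℕ) := by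
  have hR : 0 < R := (by positivity : (0 : ℝ) ≤ _).trans_lt hρ
  have hop {H : E × ℂ → ℂ}
      (hH : ∀ ζ ∈ closedBall 0 R, ∀ᶠ p in 𝓝 (x₀, ζ), DifferentiableAt ℂ H p) :
      ∀ᶠ x in 𝓝 x₀, DifferentiableAt ℂ
        (fun x ↦ circleCalculus R (fun ζ ↦ H (x, ζ)) (ρ • shift)) x :=
    eventually_differentiableAt_circleCalculus hR.le
      (fun ζ hζ ↦ hH ζ (sphere_subset_closedBall hζ))
      (Eventually.of_forall fun _ ↦ differentiableAt_const _) hρ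
  obtain ⟨q, v, hqv⟩ := eventually_exists_division (cons (1, 0)) (hop hg) (hop hF) hunit
  refine ⟨fun i ↦ ⟨fun x ↦ (ρ ^ (i : ℕ))⁻¹ * v x i, hqv.mono fun x hx ↦
    ((BoundedContinuousFunction.evalCLM ℂ (i : ℕ)).differentiableAt.comp x hx.1).const_mul _⟩, ?_⟩
  have hfst : Tendsto Prod.fst (𝓝 (x₀, (0 : ℂ))) (𝓝 x₀) := continuous_fst.tendsto _
  have hsnd : Tendsto (fun p : E × ℂ ↦ p.2 / ρ) (𝓝 (x₀, 0)) (𝓝 0) :=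
    (show Continuous fun p : E × ℂ ↦ p.2 / ρ by fun_prop).tendsto' _ _ (zero_div ρ)
  filter_upwards [hfst.eventually hqv, hfst.eventually (eventually_differentiableOn_closedBall hg),
    hfst.eventually (eventually_differentiableOn_closedBall hF),
    hsnd.eventually (ball_mem_nhds 0 one_pos),
    (continuous_snd.tendsto (x₀, (0 : ℂ))).eventually (ball_mem_nhds 0 hR)]
    with ⟨x, ζ⟩ ⟨_, hdiv, hv⟩ hgx hFx hw hζ hgp
  rw [dist_zero_right] at hw hζ
  have hρw : ρ * (ζ / ρ) = ζ := mul_div_cancel₀ ζ hρ0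
  have heval := congrArg (powerSeriesEval hw) hdiv
  rw [map_add, powerSeriesEval_circleCalculus_smul_shift hw hρ (hρw.symm ▸ hζ) hFx,
    powerSeriesEval_circleCalculus_smul_shift hw hρ (hρw.symm ▸ hζ) hgx,
    powerSeriesEval_cons, map_zero, mul_zero, add_zero, mul_one, hρw, hgp, zero_mul, zero_add,
    powerSeriesEval_eq_sum_add hw d, hv, map_zero, mul_zero, add_zero] at heval
  rw [heval, Finset.sum_range]
  exact Finset.sum_congr rfl fun i _ ↦ by rw [div_pow]; ring

theorem exists_sum_eq_of_eq_zero (g : holomorphicAt (x₀, (0 : ℂ)))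
    (hg : ¬ ∀ᶠ w in 𝓝 0, g (x₀, w) = 0) :
    ∃ d, ∀ F : holomorphicAt (x₀, (0 : ℂ)), ∃ r : Fin d → holomorphicAt x₀,
      ∀ᶠ p in 𝓝 (x₀, (0 : ℂ)), g p = 0 → F p = ∑ i, r i p.1 * p.2 ^ (i : ℕ) := by
  have hline : Tendsto (fun w : ℂ ↦ (x₀, w)) (𝓝 0) (𝓝 (x₀, 0)) :=
    (Continuous.prodMk_right x₀).tendsto 0
  have hg_an : AnalyticAt ℂ (fun w ↦ g (x₀, w)) 0 :=
    Complex.analyticAt_iff_eventually_differentiableAt.2 <|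
      (hline.eventually g.2).mono fun w hw ↦ hw.comp w (by fun_prop)
  obtain ⟨d, u, hu, hu0, hgu⟩ := hg_an.exists_eventuallyEq_pow_smul_nonzero_iff.2 hg
  refine ⟨d, fun F ↦ ?_⟩
  obtain ⟨R, hR, hball⟩ := nhds_basis_closedBall.eventually_iff.1 <|
    ((hline.eventually g.2.eventually_nhds).and (hline.eventually F.2.eventually_nhds)).and
      (hgu.and (Complex.analyticAt_iff_eventually_differentiableAt.1 hu).eventually_nhds)
  have hsmall : ∀ᶠ ρ : ℂ in 𝓝 0, ‖ρ • shift‖ * ‖(1 : (ℕ →ᵇ ℂ) →L[ℂ] (ℕ →ᵇ ℂ))‖ < R :=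
    (show Continuous fun ρ : ℂ ↦ ‖ρ • shift‖ * ‖(1 : (ℕ →ᵇ ℂ) →L[ℂ] (ℕ →ᵇ ℂ))‖ by
      fun_prop).tendsto' 0 0 (by rw [zero_smul ℂ shift, norm_zero, zero_mul])
      |>.eventually_lt_const hR
  have hu_unit := eventually_isUnit_circleCalculus_smul hR (fun ζ hζ ↦ (hball hζ).2.2) hu0 shift
  obtain ⟨ρ, ⟨hunit, hρ⟩, hρ0⟩ :=
    (((hu_unit.and hsmall).filter_mono nhdsWithin_le_nhds).and
      (eventually_mem_nhdsWithin (a := (0 : ℂ)) (s := {0}ᶜ))).exists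
  refine exists_sum_eq_of_isUnit hρ0 hρ (fun ζ hζ ↦ (hball hζ).1.1) (fun ζ hζ ↦ (hball hζ).1.2) <|
    isUnit_pow_mul_circleCalculus_smul tail_mul_shift hR.le hρ0 hρ
      (fun ζ hζ ↦ (hball hζ).2.2.self_of_nhds.differentiableWithinAt) (fun ζ hζ ↦ ?_) hunit
  simpa only [sub_zero, smul_eq_mul] using (hball (sphere_subset_closedBall hζ)).2.1

end Division

/-! ### Homomorphisms to power series -/

section Expansion

variable {k V : Type*} [Field k] [CommRing V] [Algebra k V] {ε : V →ₐ[k] k} {ϖ : V}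

theorem exists_linearMap_eq_algebraMap_add_mul (hϖ : IsLeftRegular ϖ)
    (hker : ∀ v, ε v = 0 → ϖ ∣ v) :
    ∃ N : V →ₗ[k] V, ∀ v, v = algebraMap k V (ε v) + ϖ * N v := by
  have hdvd (v : V) : ∃ w, v = algebraMap k V (ε v) + ϖ * w := by
    obtain ⟨w, hw⟩ := hker (v - algebraMap k V (ε v)) (by simp)
    exact ⟨w, sub_eq_iff_eq_add'.1 hw⟩
  choose N hN using hdvd
  refine ⟨⟨⟨N, fun v w ↦ hϖ ?_⟩, fun c v ↦ hϖ ?_⟩, hN⟩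
  · change ϖ * N (v + w) = ϖ * (N v + N w)
    have hvw := hN (v + w)
    rw [map_add, map_add] at hvw
    linear_combination hN v + hN w - hvw
  · change ϖ * N (c • v) = ϖ * (c • N v)
    have hcv := hN (c • v)
    rw [map_smul, smul_eq_mul, map_mul, Algebra.smul_def] at hcv
    rw [Algebra.smul_def, Algebra.smul_def]
    linear_combination algebraMap k V c * hN v - hcv

/-- The power series expansion of the elements of `V` in powers of `ϖ`, where `N` is the operator
which removes the constant term `ε v` and divides by `ϖ`. -/
noncomputable def expansion (ε : V →ₐ[k] k) (N : V →ₗ[k] V) : V →ₗ[k] k⟦X⟧ where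
  toFun v := .mk fun n ↦ ε ((N ^ n) v)
  map_add' v w := by ext; simp
  map_smul' c v := by ext; simp

theorem expansion_eq (N : V →ₗ[k] V) (v : V) :
    expansion ε N v = .C (ε v) + .X * expansion ε N (N v) := by
  ext n
  cases n with
  | zero => simp [expansion]
  | succ n => simp [expansion, pow_succ]

variable {N : V →ₗ[k] V}

theorem expansion_algebraMap (hϖ : IsLeftRegular ϖ)
    (hN : ∀ v, v = algebraMap k V (ε v) + ϖ * N v) (c : k) :
    expansion ε N (algebraMap k V c) = algebraMap k k⟦X⟧ c := by
  have : N (algebraMap k V c) = 0 := hϖ <| by simpa using hN (algebraMap k V c)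
  rw [expansion_eq, this, map_zero, mul_zero, add_zero, AlgHom.commutes]
  rfl

theorem expansion_mul (hϖ : IsLeftRegular ϖ) (hN : ∀ v, v = algebraMap k V (ε v) + ϖ * N v)
    (v w : V) : expansion ε N (v * w) = expansion ε N v * expansion ε N w := by
  have hNmul (v w : V) : N (v * w) = N v * w + ε v • N w := hϖ <| by
    have hvw := hN (v * w)
    rw [map_mul, map_mul] at hvw
    change ϖ * N (v * w) = ϖ * (N v * w + ε v • N w)
    rw [Algebra.smul_def]
    linear_combination w * hN v + algebraMap k V (ε v) * hN w - hvw
  ext n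
  induction n generalizing v w with
  | zero => rw [expansion_eq, expansion_eq N v, expansion_eq N w]; simp
  | succ n ih =>
    have hrhs : expansion ε N v * expansion ε N w = .C (ε v * ε w) +
        .X * (expansion ε N (N v) * expansion ε N w + ε v • expansion ε N (N w)) := by
      conv_lhs => rw [expansion_eq N v, add_mul, expansion_eq N w]
      conv_rhs => rw [expansion_eq N w]
      rw [PowerSeries.smul_eq_C_mul, map_mul]
      ring
    rw [hrhs, expansion_eq, hNmul, map_add (expansion ε N), map_smul]
    simp [ih]

theorem pow_dvd_of_expansion_eq_zero (hN : ∀ v, v = algebraMap k V (ε v) + ϖ * N v) {v : V}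
    (hv : expansion ε N v = 0) (n : ℕ) : ϖ ^ n ∣ v := by
  have hv_eq := expansion_eq (ε := ε) N v
  induction n generalizing v with
  | zero => simp
  | succ n ih =>
    rw [hv] at hv_eq
    have hεv : ε v = 0 := by simpa using (congrArg PowerSeries.constantCoeff hv_eq).symm
    have hNv : expansion ε N (N v) = 0 := by simpa [hεv, PowerSeries.X_ne_zero] using hv_eq.symm
    rw [hN v, hεv, map_zero, zero_add, pow_succ']
    exact mul_dvd_mul_left ϖ (ih hNv (expansion_eq N _))

theorem exists_algHom_powerSeries (hϖ : IsLeftRegular ϖ) (hker : ∀ v, ε v = 0 ↔ ϖ ∣ v) :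
    ∃ ψ : V →ₐ[k] k⟦X⟧, ∀ v, ψ v = 0 ↔ ∀ n, ϖ ^ n ∣ v := by
  obtain ⟨N, hN⟩ := exists_linearMap_eq_algebraMap_add_mul hϖ fun v ↦ (hker v).1
  let ψ : V →ₐ[k] k⟦X⟧ := .ofLinearMap (expansion ε N)
    (by simpa using expansion_algebraMap hϖ hN 1) (expansion_mul hϖ hN)
  have hψϖ : PowerSeries.X ∣ ψ ϖ := by
    rw [PowerSeries.X_dvd_iff]
    change PowerSeries.constantCoeff (expansion ε N ϖ) = 0
    rw [expansion_eq, (hker ϖ).2 dvd_rfl, map_zero, zero_add, map_mul, PowerSeries.constantCoeff_X,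
      zero_mul]
  refine ⟨ψ, fun v ↦ ⟨pow_dvd_of_expansion_eq_zero hN, fun hv ↦ ?_⟩⟩
  ext n
  obtain ⟨w, rfl⟩ := hv (n + 1)
  rw [map_mul, map_pow]
  exact PowerSeries.X_pow_dvd_iff.1 ((pow_dvd_pow_of_dvd hψϖ _).mul_right _) n n.lt_succ_self

end Expansion

section Lifting

theorem exists_ringHom_comp_algebraMap_eq {A B Ω : Type*} [CommRing A] [CommRing B] [Algebra A B]
    [Algebra.IsIntegral A B] [Field Ω] [IsAlgClosed Ω] (φ : A →+* Ω)
    (hφ : RingHom.ker (algebraMap A B) ≤ RingHom.ker φ) :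
    ∃ ψ : B →+* Ω, ψ.comp (algebraMap A B) = φ := by
  have : (RingHom.ker φ).IsPrime := RingHom.ker_isPrime φ
  obtain ⟨Q, -, hQ, hQφ⟩ :=
    Ideal.exists_ideal_over_prime_of_isIntegral (S := B) (RingHom.ker φ) ⊥ hφ
  have : Q.LiesOver (RingHom.ker φ) := ⟨hQφ.symm⟩
  let _ : Algebra (A ⧸ RingHom.ker φ) Ω := (RingHom.kerLift φ).toAlgebra
  have : Module.IsTorsionFree (A ⧸ RingHom.ker φ) Ω :=
    Module.isTorsionFree_iff_algebraMap_injective.2 (RingHom.kerLift_injective φ)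
  have : Module.IsTorsionFree (A ⧸ RingHom.ker φ) (B ⧸ Q) :=
    Module.isTorsionFree_iff_algebraMap_injective.2 (FaithfulSMul.algebraMap_injective _ _)
  let ψ : (B ⧸ Q) →ₐ[A ⧸ RingHom.ker φ] Ω := IsAlgClosed.lift
  exact ⟨ψ.toRingHom.comp (Ideal.Quotient.mk Q),
    RingHom.ext fun a ↦ ψ.commutes (Ideal.Quotient.mk _ a)⟩

theorem exists_ringHom_integralClosure {A B O K Ω : Type*} [CommRing A] [CommRing B] [Algebra A B]
    [Module.Finite A B] [CommRing O] [Field K] [Algebra O K] [Field Ω] [IsAlgClosed Ω]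
    [Algebra K Ω] [Algebra O Ω] [IsScalarTower O K Ω] (φ : A →+* O)
    (hφ : RingHom.ker (algebraMap A B) ≤ RingHom.ker φ) :
    ∃ L : IntermediateField K Ω, FiniteDimensional K L ∧ ∃ ψ : B →+* integralClosure O L,
      ψ.comp (algebraMap A B) = (algebraMap O (integralClosure O L)).comp φ := by
  obtain ⟨ψ, hψ⟩ := exists_ringHom_comp_algebraMap_eq (B := B) ((algebraMap O Ω).comp φ)
    (hφ.trans fun a ha ↦ by simp [RingHom.mem_ker.1 ha])
  have hint (b : B) : IsIntegral O (ψ b) := by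
    obtain ⟨p, hp, hpb⟩ := Algebra.IsIntegral.isIntegral (R := A) b
    refine ⟨p.map φ, hp.map φ, ?_⟩
    rw [Polynomial.eval₂_map, ← hψ, ← Polynomial.hom_eval₂, hpb, map_zero]
  obtain ⟨s, hs⟩ := Module.Finite.fg_top (R := A) (M := B)
  let L := IntermediateField.adjoin K (ψ '' s)
  have : FiniteDimensional K L := IntermediateField.finiteDimensional_adjoin
    (S := ψ '' s) (by rintro _ ⟨b, -, rfl⟩; exact (hint b).tower_top)
  have hψL (b : B) : ψ b ∈ L := by
    have hb : b ∈ Submodule.span A (s : Set B) := hs ▸ Submodule.mem_top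
    induction hb using Submodule.span_induction with
    | mem b hb => exact IntermediateField.subset_adjoin K _ (mem_image_of_mem ψ hb)
    | zero => rw [map_zero]; exact zero_mem L
    | add b c _ _ hb hc => rw [map_add]; exact add_mem hb hc
    | smul a b _ hb =>
      rw [Algebra.smul_def, map_mul, ← RingHom.comp_apply, hψ, RingHom.comp_apply,
        IsScalarTower.algebraMap_apply O K Ω]
      exact mul_mem (L.algebraMap_mem _) hb
  refine ⟨L, this, (ψ.codRestrict L hψL).codRestrict (integralClosure O L) fun b ↦ ?_, ?_⟩
  · exact (isIntegral_algHom_iff ((L.val).restrictScalars O) Subtype.val_injective).1 (hint b)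
  · ext a
    exact congrArg (· a) hψ

end Lifting

section PowerSeriesPoint

theorem isPrincipalIdealRing_of_isIntegral_of_isDiscreteValuationRing {O C : Type*} [CommRing O]
    [IsDomain O] [IsDiscreteValuationRing O] [CommRing C] [IsDedekindDomain C] [Algebra O C]
    [Algebra.IsIntegral O C] [Module.IsTorsionFree O C] : IsPrincipalIdealRing C := by
  refine .of_finite_primes <| ((IsDedekindDomain.primesOver_finite
    (IsLocalRing.maximalIdeal O) C).insert ⊥).subset fun I hI ↦ ?_
  rw [mem_insert_iff, or_iff_not_imp_left]
  intro hI0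
  have : I.IsPrime := hI
  exact ⟨hI, ⟨(IsLocalRing.eq_maximalIdeal <| Ring.DimensionLEOne.maximalOfPrime
    (mt Ideal.eq_bot_of_comap_eq_bot hI0) (Ideal.comap_isPrime (algebraMap O C) I)).symm⟩⟩

variable {k C : Type*} [Field k] [IsAlgClosed k] [CommRing C] [Algebra k⟦X⟧ C]
  [Algebra.IsIntegral k⟦X⟧ C] [Algebra k C] [IsScalarTower k k⟦X⟧ C]

theorem bijective_algebraMap_quotient (P : Ideal C) [P.IsPrime]
    (hP : algebraMap k⟦X⟧ C .X ∈ P) :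
    Function.Bijective (algebraMap k (C ⧸ P)) := by
  have hconst : (algebraMap k (C ⧸ P)).comp PowerSeries.constantCoeff =
      algebraMap k⟦X⟧ (C ⧸ P) := by
    ext f
    have hf : algebraMap k⟦X⟧ C (f - algebraMap k k⟦X⟧ f.constantCoeff) ∈ P := by
      obtain ⟨g, hg⟩ := PowerSeries.X_dvd_iff.2
        (show (f - algebraMap k k⟦X⟧ f.constantCoeff).constantCoeff = 0 by simp)
      rw [hg, map_mul]
      exact P.mul_mem_right _ hP
    rw [map_sub, ← Ideal.Quotient.eq, ← IsScalarTower.algebraMap_apply] at hf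
    exact hf.symm
  have : Algebra.IsIntegral k (C ⧸ P) := ⟨fun x ↦ by
    obtain ⟨p, hp, hpx⟩ := Algebra.IsIntegral.isIntegral (R := k⟦X⟧) x
    refine ⟨p.map PowerSeries.constantCoeff, hp.map _, ?_⟩
    rw [Polynomial.eval₂_map, hconst, hpx]⟩
  exact IsAlgClosed.algebraMap_bijective_of_isIntegral

theorem exists_injective_algHom_powerSeries [IsDedekindDomain C] [Module.IsTorsionFree k⟦X⟧ C] :
    ∃ ι : C →ₐ[k] k⟦X⟧, Function.Injective ι := by
  have : IsPrincipalIdealRing C :=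
    isPrincipalIdealRing_of_isIntegral_of_isDiscreteValuationRing (O := k⟦X⟧)
  obtain ⟨P, hPprime, hP⟩ := Ideal.nonempty_primesOver (S := C) (IsLocalRing.maximalIdeal k⟦X⟧)
  obtain ⟨ϖ, hϖ⟩ := (IsPrincipalIdealRing.principal P).principal
  have hXP : algebraMap k⟦X⟧ C .X ∈ P := by
    rw [← Ideal.mem_comap, ← Ideal.under_def, ← hP.over, PowerSeries.maximalIdeal_eq_span_X]
    exact Ideal.mem_span_singleton_self _
  let e := AlgEquiv.ofBijective (Algebra.ofId k (C ⧸ P)) (bijective_algebraMap_quotient P hXP)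
  let ε : C →ₐ[k] k := e.symm.toAlgHom.comp (Ideal.Quotient.mkₐ k P)
  have hker (v : C) : ε v = 0 ↔ ϖ ∣ v := by
    rw [← Ideal.mem_span_singleton, ← Ideal.submodule_span_eq, ← hϖ,
      ← Ideal.Quotient.eq_zero_iff_mem]
    exact e.symm.map_eq_zero_iff
  have hϖ0 : ϖ ≠ 0 := by
    rintro rfl
    rw [Submodule.span_singleton_eq_bot.2 rfl] at hϖ
    rw [hϖ, Ideal.mem_bot, map_eq_zero_iff _ (FaithfulSMul.algebraMap_injective _ _)] at hXP
    exact PowerSeries.X_ne_zero hXP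
  obtain ⟨ι, hι⟩ := exists_algHom_powerSeries (IsRegular.of_ne_zero hϖ0).left hker
  refine ⟨ι, (injective_iff_map_eq_zero ι).2 fun v hv ↦ ?_⟩
  have : v ∈ ⨅ n, P ^ n := by
    rw [hϖ, Submodule.mem_iInf]
    intro n
    rw [Ideal.submodule_span_eq, Ideal.span_singleton_pow, Ideal.mem_span_singleton]
    exact (hι v).1 hv n
  rwa [Ideal.iInf_pow_eq_bot_of_isDomain P hPprime.ne_top] at this

/- `φ` extends to a homomorphism from `B` to a finite normal extension of `k⟦X⟧`. That extension is
a principal ideal domain with residue field `k`, so expansion in powers of a prime element over `X`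
embeds it into `k⟦X⟧`. -/
theorem exists_algHom_powerSeries_of_finite {k A B : Type*} [Field k] [IsAlgClosed k] [CharZero k]
    [CommRing A] [CommRing B] [Algebra k A] [Algebra k B] [Algebra A B] [IsScalarTower k A B]
    [Module.Finite A B] (φ : A →ₐ[k] k⟦X⟧)
    (hφ : RingHom.ker (algebraMap A B) ≤ RingHom.ker φ) :
    ∃ ψ : B →ₐ[k] k⟦X⟧, ∀ a, ψ (algebraMap A B a) = 0 → φ a = 0 := by
  obtain ⟨L, hL, ψ, hψ⟩ := exists_ringHom_integralClosure (K := FractionRing k⟦X⟧)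
    (Ω := AlgebraicClosure (FractionRing k⟦X⟧)) (B := B) (φ : A →+* k⟦X⟧) hφ
  have : CharZero k⟦X⟧ := charZero_of_injective_algebraMap (FaithfulSMul.algebraMap_injective k _)
  have : CharZero (FractionRing k⟦X⟧) :=
    charZero_of_injective_algebraMap (FaithfulSMul.algebraMap_injective k⟦X⟧ _)
  have : Module.IsTorsionFree k⟦X⟧ L := .trans_faithfulSMul k⟦X⟧ (FractionRing k⟦X⟧) L
  have : Module.IsTorsionFree k⟦X⟧ (integralClosure k⟦X⟧ L) :=
    Subalgebra.instIsTorsionFree _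
  have : IsDedekindDomain (integralClosure k⟦X⟧ L) :=
    integralClosure.isDedekindDomain k⟦X⟧ (FractionRing k⟦X⟧) L
  let _ : Algebra k (integralClosure k⟦X⟧ L) :=
    ((algebraMap k⟦X⟧ _).comp (algebraMap k k⟦X⟧)).toAlgebra
  have : IsScalarTower k k⟦X⟧ (integralClosure k⟦X⟧ L) := .of_algebraMap_eq fun _ ↦ rfl
  obtain ⟨ι, hι⟩ := exists_injective_algHom_powerSeries (k := k) (C := integralClosure k⟦X⟧ L)
  have hψ' (a : A) : ψ (algebraMap A B a) = algebraMap k⟦X⟧ _ (φ a) := RingHom.congr_fun hψ a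
  have hψk (c : k) : ψ (algebraMap k B c) = algebraMap k _ c := by
    rw [IsScalarTower.algebraMap_apply k A B, hψ', φ.commutes, ← IsScalarTower.algebraMap_apply]
  refine ⟨ι.comp ⟨ψ, hψk⟩, fun a ha ↦ ?_⟩
  have : algebraMap k⟦X⟧ (integralClosure k⟦X⟧ L) (φ a) = 0 := by
    rw [← hψ', ← map_eq_zero_iff ι hι]
    exact ha
  rwa [map_eq_zero_iff _ (FaithfulSMul.algebraMap_injective _ _)] at this

theorem exists_algHom_powerSeries_ne_zero_of_finite {k A B : Type*} [Field k] [IsAlgClosed k]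
    [CharZero k] [CommRing A] [CommRing B] [IsDomain B] [Algebra k A] [Algebra k B]
    {σ : A →ₐ[k] B} (hσ : σ.Finite) (hA : ∀ a, σ a ≠ 0 → ∃ φ : A →ₐ[k] k⟦X⟧,
      RingHom.ker σ ≤ RingHom.ker φ ∧ φ a ≠ 0) {b : B} (hb : b ≠ 0) :
    ∃ ψ : B →ₐ[k] k⟦X⟧, ψ b ≠ 0 := by
  let _ := σ.toRingHom.toAlgebra
  have : Module.Finite A B := hσ
  have : IsScalarTower k A B := .of_algHom σ
  obtain ⟨a, ⟨c, hc⟩, ha⟩ : ∃ a, b ∣ σ a ∧ σ a ≠ 0 := by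
    obtain ⟨-, a, hab, ha⟩ := SetLike.lt_iff_le_and_exists.1 <|
      Ideal.comap_lt_comap_of_integral_mem_sdiff (R := A) (bot_le : ⊥ ≤ Ideal.span {b})
        ⟨Ideal.mem_span_singleton_self b, hb⟩ (Algebra.IsIntegral.isIntegral b)
    exact ⟨a, Ideal.mem_span_singleton.1 hab, ha⟩
  obtain ⟨φ, hφ, hφa⟩ := hA a ha
  obtain ⟨ψ, hψ⟩ := exists_algHom_powerSeries_of_finite φ hφ
  refine ⟨ψ, fun hψb ↦ hφa <| hψ a ?_⟩
  change ψ (σ a) = 0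
  rw [hc, map_mul, hψb, zero_mul]

end PowerSeriesPoint

/-! ### Formal curves in zero sets -/

section Taylor

namespace holomorphicAt

theorem id_dvd_iff {F : holomorphicAt (0 : ℂ)} :
    ofCLM (0 : ℂ) (.id ℂ ℂ) ∣ F ↔ F (0 : ℂ) = 0 := by
  refine ⟨fun ⟨G, hG⟩ ↦ by rw [hG]; exact zero_mul _, fun h0 ↦ ?_⟩
  obtain ⟨s, hs, hsF⟩ := eventually_iff_exists_mem.1 F.2
  have hslope : DifferentiableOn ℂ (dslope (F : ℂ → ℂ) 0) s :=
    (Complex.differentiableOn_dslope hs).2 fun x hx ↦ (hsF x hx).differentiableWithinAt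
  refine ⟨⟨dslope F 0, hslope.eventually_differentiableAt hs⟩, Subtype.ext <| funext fun x ↦ ?_⟩
  have := sub_smul_dslope (F : ℂ → ℂ) 0 x
  rw [h0, sub_zero, sub_zero] at this
  exact this.symm

theorem forall_id_pow_dvd_iff {F : holomorphicAt (0 : ℂ)} :
    (∀ n, ofCLM (0 : ℂ) (.id ℂ ℂ) ^ n ∣ F) ↔ ∀ᶠ x in 𝓝 0, F x = 0 := by
  refine ⟨fun h ↦ ?_, fun h n ↦ ?_⟩
  · rw [← analyticOrderAt_eq_top, ENat.eq_top_iff_forall_ge]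
    intro n
    obtain ⟨G, hG⟩ := h n
    have hG_an : AnalyticAt ℂ G 0 := Complex.analyticAt_iff_eventually_differentiableAt.2 G.2
    rw [natCast_le_analyticOrderAt (Complex.analyticAt_iff_eventually_differentiableAt.2 F.2)]
    exact ⟨G, hG_an, .of_forall fun x ↦ by rw [hG, sub_zero]; rfl⟩
  · have hdiv : ∀ᶠ x in 𝓝 (0 : ℂ), F x / x ^ n = 0 := h.mono fun x hx ↦ by rw [hx, zero_div]
    have hdiff : ∀ᶠ x in 𝓝 (0 : ℂ), DifferentiableAt ℂ (fun x ↦ F x / x ^ n) x :=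
      hdiv.eventually_nhds.mono fun x hx ↦ (differentiableAt_const (0 : ℂ)).congr_of_eventuallyEq hx
    refine ⟨⟨_, hdiff⟩, Subtype.ext <| funext fun x ↦ (mul_div_cancel_of_imp' fun hx ↦ ?_).symm⟩
    obtain rfl : x = 0 := eq_zero_of_pow_eq_zero (n := n) hx
    exact h.self_of_nhds

theorem isLeftRegular_id : IsLeftRegular (ofCLM (0 : ℂ) (.id ℂ ℂ)) := by
  intro F G hFG
  have hne (x : ℂ) (hx : x ≠ 0) : F x = G x :=
    mul_left_cancel₀ hx (congrFun (congrArg Subtype.val hFG) x)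
  have h0 : (F : ℂ → ℂ) =ᶠ[𝓝 0] G :=
    (F.2.self_of_nhds.continuousAt.eventuallyEq_nhds_iff_eventuallyEq_nhdsNE
      G.2.self_of_nhds.continuousAt).1 (eventually_mem_nhdsWithin.mono hne)
  ext x
  obtain rfl | hx := eq_or_ne x 0
  exacts [h0.self_of_nhds, hne x hx]

theorem exists_algHom_powerSeries_eq_zero_iff : ∃ ψ : holomorphicAt (0 : ℂ) →ₐ[ℂ] ℂ⟦X⟧,
    ∀ F, ψ F = 0 ↔ ∀ᶠ x in 𝓝 0, F x = 0 := by
  simp only [← forall_id_pow_dvd_iff]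
  exact exists_algHom_powerSeries (ε := eval 0) isLeftRegular_id fun F ↦ id_dvd_iff.symm

end holomorphicAt
end Taylor

theorem ringHom_finite_of_forall_eq_sum {A B ι : Type*} [CommRing A] [CommRing B] [Fintype ι]
    {f : A →+* B} (s : ι → B) (h : ∀ b, ∃ r : ι → A, b = ∑ i, f (r i) * s i) : f.Finite := by
  let _ := f.toAlgebra
  refine Module.Finite.of_surjective (Fintype.linearCombination A s) fun b ↦ ?_
  obtain ⟨r, hr⟩ := h b
  exact ⟨r, hr.symm⟩

section HasFormalCurves

variable {E E' : Type*} [NormedAddCommGroup E] [NormedSpace ℂ E]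
  [NormedAddCommGroup E'] [NormedSpace ℂ E'] {x₀ : E} {y₀ : E'}

namespace holomorphicAt

theorem exists_line_not_eventually_eq_zero {F : holomorphicAt x₀} (hF : ¬ ∀ᶠ x in 𝓝 x₀, F x = 0) :
    ∃ v, ¬ ∀ᶠ t in 𝓝 (0 : ℂ), F (x₀ + t • v) = 0 := by
  obtain ⟨r, hr, hball⟩ := eventually_nhds_iff_ball.1 F.2
  obtain ⟨x, hFx, hx⟩ := ((not_eventually.1 hF).and_eventually (ball_mem_nhds x₀ hr)).exists
  refine ⟨x - x₀, fun hline ↦ hFx ?_⟩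
  let s : Set ℂ := (fun t : ℂ ↦ x₀ + t • (x - x₀)) ⁻¹' ball x₀ r
  have hs_conv : Convex ℝ s := ((convex_ball x₀ r).translate_preimage_right x₀).linear_preimage
    ((LinearMap.toSpanSingleton ℂ E (x - x₀)).restrictScalars ℝ)
  have hs_open : IsOpen s := isOpen_ball.preimage (by fun_prop)
  have hF_an : AnalyticOnNhd ℂ (fun t : ℂ ↦ F (x₀ + t • (x - x₀))) s :=
    DifferentiableOn.analyticOnNhd (fun t ht ↦
      ((hball _ ht).comp t (by fun_prop)).differentiableWithinAt) hs_open
  have hF_one := hF_an.eqOn_zero_of_preconnected_of_eventuallyEq_zero hs_conv.isPreconnected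
    (z₀ := 0) (by simpa [s]) hline (x := 1) (by simpa [s] using hx)
  simpa using hF_one

/-- The ideal of the holomorphic functions which vanish along `l`. For an ultrafilter `l` which
converges to `x₀`, it plays the role of an irreducible germ of analytic sets at `x₀`. -/
def vanishingIdeal (x₀ : E) (l : Filter E) : Ideal (holomorphicAt x₀) where
  carrier := {F | ∀ᶠ x in l, F x = 0}
  zero_mem' := .of_forall fun _ ↦ rfl
  add_mem' hF hG := (hF.and hG).mono fun x h ↦ by simp [h.1, h.2]
  smul_mem' F G hG := hG.mono fun x h ↦ by simp [h]

theorem mem_vanishingIdeal {l : Filter E} {F : holomorphicAt x₀} :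
    F ∈ vanishingIdeal x₀ l ↔ ∀ᶠ x in l, F x = 0 := .rfl

instance (𝒰 : Ultrafilter E) : (vanishingIdeal x₀ 𝒰).IsPrime where
  ne_top' := (Ideal.ne_top_iff_one _).2 fun h ↦ by
    simpa using (mem_vanishingIdeal.1 h).exists
  mem_or_mem' {F G} h := by
    simp only [mem_vanishingIdeal] at h ⊢
    rw [← Ultrafilter.eventually_or]
    exact h.mono fun x hx ↦ mul_eq_zero.1 hx

/-- The formal curves through `x₀` which lie in the zero set of `vanishingIdeal x₀ l` separate the
points of the coordinate ring of that set. -/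
def HasFormalCurves (x₀ : E) (l : Filter E) : Prop :=
  ∀ h ∉ vanishingIdeal x₀ l, ∃ φ : holomorphicAt x₀ →ₐ[ℂ] ℂ⟦X⟧,
    vanishingIdeal x₀ l ≤ RingHom.ker φ ∧ φ h ≠ 0

theorem HasFormalCurves.of_equiv {l : Filter E} (e : E ≃ E') (hex : e x₀ = y₀)
    (he : ∀ᶠ y in 𝓝 y₀, DifferentiableAt ℂ e.symm y) (hl : HasFormalCurves y₀ (l.map e)) :
    HasFormalCurves x₀ l := by
  intro h hh
  let pull : holomorphicAt x₀ →ₐ[ℂ] holomorphicAt y₀ :=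
    comp e.symm he (by rw [← hex, e.symm_apply_apply])
  have hpull (F : holomorphicAt x₀) : pull F ∈ vanishingIdeal y₀ (l.map e) ↔
      F ∈ vanishingIdeal x₀ l := by
    simp [mem_vanishingIdeal, pull]
  obtain ⟨φ, hφ, hφh⟩ := hl (pull h) (mt (hpull h).1 hh)
  exact ⟨φ.comp pull, fun F hF ↦ hφ ((hpull F).2 hF), hφh⟩

theorem HasFormalCurves.of_le_nhds {l : Filter E} (hl : l ≤ 𝓝 x₀)
    (h : ∀ F ∈ vanishingIdeal x₀ l, ∀ᶠ x in 𝓝 x₀, F x = 0) : HasFormalCurves x₀ l := by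
  intro F hF
  obtain ⟨v, hv⟩ := exists_line_not_eventually_eq_zero fun hF0 ↦ hF (hl hF0)
  obtain ⟨ψ, hψ⟩ := exists_algHom_powerSeries_eq_zero_iff
  have hline : Tendsto (fun t : ℂ ↦ x₀ + t • v) (𝓝 0) (𝓝 x₀) :=
    Continuous.tendsto' (by fun_prop) _ _ (by simp)
  refine ⟨ψ.comp (comp (fun t : ℂ ↦ x₀ + t • v) (.of_forall fun _ ↦ by fun_prop) (by simp)),
    fun G hG ↦ (hψ _).2 (hline.eventually (h G hG)), mt (hψ _).1 hv⟩

variable (x₀) in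
/-- The restriction of functions of the first variable to the zero set of an ideal of functions on
the product. -/
noncomputable def fstQuotient (I : Ideal (holomorphicAt (x₀, (0 : ℂ)))) :
    holomorphicAt x₀ →ₐ[ℂ] holomorphicAt (x₀, (0 : ℂ)) ⧸ I :=
  (Ideal.Quotient.mkₐ ℂ I).comp (comp Prod.fst (.of_forall fun _ ↦ differentiableAt_fst) rfl)

theorem finite_fstQuotient_vanishingIdeal [FiniteDimensional ℂ E] {l : Filter (E × ℂ)}
    (hl : l ≤ 𝓝 (x₀, 0)) {g : holomorphicAt (x₀, (0 : ℂ))}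
    (hg : g ∈ vanishingIdeal (x₀, (0 : ℂ)) l) (hg0 : ¬ ∀ᶠ w in 𝓝 0, g (x₀, w) = 0) :
    AlgHom.Finite (A := holomorphicAt x₀)
      (B := holomorphicAt (x₀, (0 : ℂ)) ⧸ vanishingIdeal (x₀, (0 : ℂ)) l)
      (fstQuotient x₀ (vanishingIdeal (x₀, (0 : ℂ)) l)) := by
  obtain ⟨d, hd⟩ := exists_sum_eq_of_eq_zero g hg0
  let I := vanishingIdeal (x₀, (0 : ℂ)) l
  let pull : holomorphicAt x₀ →ₐ[ℂ] holomorphicAt (x₀, (0 : ℂ)) :=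
    comp Prod.fst (.of_forall fun _ ↦ differentiableAt_fst) rfl
  let w : holomorphicAt (x₀, (0 : ℂ)) := ofCLM _ (.snd ℂ E ℂ)
  refine ringHom_finite_of_forall_eq_sum (f := (fstQuotient x₀ I).toRingHom)
    (fun i : Fin d ↦ Ideal.Quotient.mk I (w ^ (i : ℕ))) fun F ↦ ?_
  obtain ⟨F, rfl⟩ := Ideal.Quotient.mk_surjective F
  obtain ⟨r, hr⟩ := hd F
  have hF : F - ∑ i, pull (r i) * w ^ (i : ℕ) ∈ I := by
    filter_upwards [hl hr, hg] with p hp hgp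
    simp [hp hgp, pull, w, ofCLM]
  exact ⟨r, (Ideal.Quotient.eq.2 hF).trans (by simp only [map_sum, map_mul]; rfl)⟩

theorem HasFormalCurves.of_map_fst [FiniteDimensional ℂ E] {𝒰 : Ultrafilter (E × ℂ)}
    (h𝒰 : (𝒰 : Filter (E × ℂ)) ≤ 𝓝 (x₀, 0)) {g : holomorphicAt (x₀, (0 : ℂ))}
    (hg : g ∈ vanishingIdeal (x₀, (0 : ℂ)) 𝒰) (hg0 : ¬ ∀ᶠ w in 𝓝 0, g (x₀, w) = 0)
    (hfst : HasFormalCurves x₀ (𝒰.map Prod.fst)) : HasFormalCurves (x₀, (0 : ℂ)) 𝒰 := by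
  intro h hh
  have hfst_mem (F : holomorphicAt x₀) : fstQuotient x₀ (vanishingIdeal (x₀, (0 : ℂ)) 𝒰) F = 0 ↔
      F ∈ vanishingIdeal x₀ (𝒰.map Prod.fst) := Ideal.Quotient.eq_zero_iff_mem
  obtain ⟨ψ, hψ⟩ := exists_algHom_powerSeries_ne_zero_of_finite
    (finite_fstQuotient_vanishingIdeal h𝒰 hg hg0) (fun a ha ↦ by
      obtain ⟨φ, hφ, hφa⟩ := hfst a (mt (hfst_mem a).2 ha)
      exact ⟨φ, fun F hF ↦ hφ ((hfst_mem F).1 hF), hφa⟩)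
    (mt Ideal.Quotient.eq_zero_iff_mem.1 hh)
  refine ⟨ψ.comp (Ideal.Quotient.mkₐ ℂ _), fun F hF ↦ ?_, hψ⟩
  rw [RingHom.mem_ker, AlgHom.comp_apply, Ideal.Quotient.mkₐ_eq_mk,
    Ideal.Quotient.eq_zero_iff_mem.2 hF, map_zero]

end holomorphicAt

end HasFormalCurves

theorem exists_continuousLinearEquiv_ker_prod {𝕜 V : Type*} [Field 𝕜] [TopologicalSpace 𝕜]
    [IsTopologicalRing 𝕜] [AddCommGroup V] [Module 𝕜 V] [TopologicalSpace V]
    [IsTopologicalAddGroup V] [ContinuousSMul 𝕜 V] [SeparatingDual 𝕜 V] {v : V} (hv : v ≠ 0) :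
    ∃ (l : V →L[𝕜] 𝕜) (e : V ≃L[𝕜] l.ker × 𝕜), e v = (0, 1) := by
  obtain ⟨l, hl⟩ := SeparatingDual.exists_eq_one (R := 𝕜) hv
  have hinv : Function.RightInverse (ContinuousLinearMap.toSpanSingleton 𝕜 v) l :=
    fun c ↦ by simp [hl]
  let e := (ContinuousLinearEquiv.equivOfRightInverse l _ hinv).trans (.prodComm 𝕜 𝕜 l.ker)
  refine ⟨l, e, e.symm.injective ?_⟩
  rw [e.symm_apply_apply]
  simp [e]

namespace holomorphicAt

variable {E : Type*} [NormedAddCommGroup E] [NormedSpace ℂ E]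

theorem apply_eq_zero_of_mem_vanishingIdeal {x₀ : E} {l : Filter E} [l.NeBot]
    (hl : l ≤ 𝓝 x₀) {F : holomorphicAt x₀} (hF : F ∈ vanishingIdeal x₀ l) : F x₀ = 0 :=
  tendsto_nhds_unique (F.2.self_of_nhds.continuousAt.tendsto.mono_left hl)
    (tendsto_const_nhds.congr' (hF.mono fun _ ↦ Eq.symm))

theorem hasFormalCurves_of_le_nhds [FiniteDimensional ℂ E] {x₀ : E} {𝒰 : Ultrafilter E}
    (h𝒰 : (𝒰 : Filter E) ≤ 𝓝 x₀) : HasFormalCurves x₀ 𝒰 := by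
  induction hn : Module.finrank ℂ E using Nat.strong_induction_on generalizing E with
  | _ n ih =>
    by_cases! hall : ∀ F ∈ vanishingIdeal x₀ 𝒰, ∀ᶠ x in 𝓝 x₀, F x = 0
    · exact .of_le_nhds h𝒰 hall
    obtain ⟨g, hg, hg0⟩ := hall
    obtain ⟨v, hv⟩ := exists_line_not_eventually_eq_zero (not_eventually.2 hg0)
    have hv0 : v ≠ 0 := by
      rintro rfl
      exact hv (.of_forall fun t ↦ by simpa using apply_eq_zero_of_mem_vanishingIdeal h𝒰 hg)
    obtain ⟨l, e, he⟩ := exists_continuousLinearEquiv_ker_prod (𝕜 := ℂ) hv0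
    have hfinrank : Module.finrank ℂ l.ker < n := by
      rw [← hn, e.toLinearEquiv.finrank_eq, Module.finrank_prod, Module.finrank_self]
      exact Nat.lt_succ_self _
    let e' : E ≃ₜ l.ker × ℂ := (Homeomorph.subRight x₀).trans e.toHomeomorph
    have he' : e' x₀ = 0 := by simp [e']
    have hdiff : Differentiable ℂ e'.symm := e.symm.differentiable.add_const x₀
    let pull : holomorphicAt x₀ →ₐ[ℂ] holomorphicAt (0 : l.ker × ℂ) :=
      comp e'.symm (.of_forall hdiff) (by rw [← he', e'.symm_apply_apply])
    have h𝒰' : Tendsto e' 𝒰 (𝓝 0) := he' ▸ e'.continuous.continuousAt.mono_left h𝒰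
    refine .of_equiv e'.toEquiv he' (.of_forall hdiff) <|
      .of_map_fst (g := pull g) (𝒰 := 𝒰.map e') h𝒰' ?_ (mt ?_ hv) (ih _ hfinrank ?_ rfl)
    · rw [mem_vanishingIdeal, Ultrafilter.coe_map, eventually_map]
      simpa [pull] using mem_vanishingIdeal.1 hg
    · refine fun h ↦ h.mono fun t ht ↦ ?_
      have hline : e'.symm (0, t) = x₀ + t • v := by
        rw [e'.symm_apply_eq]
        simp [e', he]
      rwa [← hline]
    · exact continuous_fst.continuousAt.tendsto.comp h𝒰'

end holomorphicAt

section FormalCurve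

variable {E E' : Type*} [NormedAddCommGroup E] [NormedSpace ℂ E]
  [NormedAddCommGroup E'] [NormedSpace ℂ E'] {x₀ : E} {y₀ : E'}

namespace holomorphicAt

variable [FiniteDimensional ℂ E]

/-- The `i`-th coordinate of `x - x₀` in the basis `b`. -/
noncomputable def localCoord {ι : Type*} (b : Module.Basis ι ℂ E) (x₀ : E) (i : ι) :
    holomorphicAt x₀ :=
  ⟨fun x ↦ b.coord i (x - x₀), .of_forall fun x ↦
    (b.coord i).toContinuousLinearMap.differentiableAt.comp x (differentiableAt_id.sub_const x₀)⟩

theorem exists_eq_add_sum_localCoord_mul {ι : Type*} [Fintype ι] (b : Module.Basis ι ℂ E)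
    (F : holomorphicAt x₀) : ∃ G : ι → holomorphicAt x₀, ∀ᶠ x in 𝓝 x₀,
      F x = (algebraMap ℂ _ (F x₀) + ∑ i, localCoord b x₀ i * G i : holomorphicAt x₀) x := by
  obtain ⟨G, hG⟩ := exists_eq_add_sum_coord_mul b F
  exact ⟨G, hG.mono fun x hx ↦ by simpa [localCoord] using hx⟩

theorem eventually_partialDeriv_eq {F G : holomorphicAt x₀} (h : ∀ᶠ x in 𝓝 x₀, F x = G x) (v : E) :
    ∀ᶠ x in 𝓝 x₀, partialDeriv v F x = partialDeriv v G x :=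
  h.eventually_nhds.mono fun x hx ↦ by
    change fderiv ℂ F x v = fderiv ℂ G x v
    rw [EventuallyEq.fderiv_eq hx]

theorem eventually_partialDeriv_add_sum_localCoord_mul {ι : Type*} [Fintype ι]
    (b : Module.Basis ι ℂ E) (c : ℂ) (G : ι → holomorphicAt x₀) (j : ι) : ∀ᶠ x in 𝓝 x₀,
      partialDeriv (b j) (algebraMap ℂ _ c + ∑ i, localCoord b x₀ i * G i) x =
        (G j + ∑ i, localCoord b x₀ i * partialDeriv (b j) (G i) : holomorphicAt x₀) x := by
  classical
  filter_upwards [eventually_all.2 fun i ↦ (G i).2] with x hG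
  have hcoord (i : ι) : HasFDerivAt (localCoord b x₀ i) (b.coord i).toContinuousLinearMap x :=
    (b.coord i).toContinuousLinearMap.hasFDerivAt.comp x ((hasFDerivAt_id x).sub_const x₀)
  have hfun : ((algebraMap ℂ _ c + ∑ i, localCoord b x₀ i * G i : holomorphicAt x₀) : E → ℂ) =
      fun x ↦ c + ∑ i, localCoord b x₀ i x * G i x := by
    ext
    simp
  have hsum := (HasFDerivAt.fun_sum (u := Finset.univ) fun i _ ↦
    (hcoord i).mul (hG i).hasFDerivAt).const_add c
  change fderiv ℂ (algebraMap ℂ _ c + ∑ i, localCoord b x₀ i * G i : holomorphicAt x₀) x (b j) = _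
  rw [hfun]
  refine (congrArg (· (b j)) hsum.fderiv).trans ?_
  simp [Finset.sum_add_distrib, Finsupp.single_apply, partialDeriv, add_comm]

end holomorphicAt

open holomorphicAt

/-- A formal curve through `x₀`, encoded as the substitution of the curve into functions: an algebra
homomorphism to the power series which depends only on germs at `x₀`. -/
def IsFormalCurve (φ : holomorphicAt x₀ →ₐ[ℂ] ℂ⟦X⟧) : Prop :=
  ∀ F : holomorphicAt x₀, (∀ᶠ x in 𝓝 x₀, F x = 0) → φ F = 0

namespace IsFormalCurve

variable {φ : holomorphicAt x₀ →ₐ[ℂ] ℂ⟦X⟧}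

theorem map_eq (hφ : IsFormalCurve φ) {F G : holomorphicAt x₀}
    (h : ∀ᶠ x in 𝓝 x₀, F x = G x) : φ F = φ G := by
  rw [← sub_eq_zero, ← map_sub]
  exact hφ _ (h.mono fun x hx ↦ sub_eq_zero.2 hx)

theorem comp (hφ : IsFormalCurve φ) {g : E → E'} (hg : ∀ᶠ x in 𝓝 x₀, DifferentiableAt ℂ g x)
    (hgx : g x₀ = y₀) : IsFormalCurve (φ.comp (holomorphicAt.comp g hg hgx)) := fun _ hF ↦
  hφ _ ((hgx ▸ hg.self_of_nhds.continuousAt.tendsto : Tendsto g (𝓝 x₀) (𝓝 y₀)).eventually hF)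

theorem constantCoeff_apply (hφ : IsFormalCurve φ) (F : holomorphicAt x₀) :
    (φ F).constantCoeff = F x₀ := by
  by_contra hne
  set c := (φ F).constantCoeff
  let H : holomorphicAt x₀ := F - algebraMap ℂ _ c
  have hH0 : H x₀ ≠ 0 := sub_ne_zero.2 (Ne.symm hne)
  have hH : ∀ᶠ x in 𝓝 x₀, H x ≠ 0 := H.2.self_of_nhds.continuousAt.eventually_ne hH0
  let H' : holomorphicAt x₀ := ⟨fun x ↦ (H x)⁻¹, (H.2.and hH).mono fun x hx ↦ hx.1.inv hx.2⟩
  have hmul : φ (H * H') = φ 1 := hφ.map_eq (hH.mono fun x hx ↦ mul_inv_cancel₀ hx)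
  have hzero := congrArg PowerSeries.constantCoeff hmul
  simp [H, c] at hzero

theorem derivative_apply [FiniteDimensional ℂ E] {ι : Type*} [Fintype ι]
    (hφ : IsFormalCurve φ) (b : Module.Basis ι ℂ E) (F : holomorphicAt x₀) :
    PowerSeries.derivative ℂ (φ F) =
      ∑ j, φ (partialDeriv (b j) F) * PowerSeries.derivative ℂ (φ (localCoord b x₀ j)) := by
  let δ (F : holomorphicAt x₀) : ℂ⟦X⟧ := PowerSeries.derivative ℂ (φ F) -
      ∑ j, φ (partialDeriv (b j) F) * PowerSeries.derivative ℂ (φ (localCoord b x₀ j))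
  have hX (i : ι) : PowerSeries.X ∣ φ (localCoord b x₀ i) := by
    rw [PowerSeries.X_dvd_iff, hφ.constantCoeff_apply]
    simp [localCoord]
  have hδ (F : holomorphicAt x₀) : ∃ G : ι → holomorphicAt x₀,
      δ F = ∑ i, φ (localCoord b x₀ i) * δ (G i) := by
    obtain ⟨G, hG⟩ := exists_eq_add_sum_localCoord_mul b F
    refine ⟨G, ?_⟩
    have hpartial (j : ι) := (hφ.map_eq (eventually_partialDeriv_eq hG (b j))).trans
      (hφ.map_eq (eventually_partialDeriv_add_sum_localCoord_mul b (F x₀) G j))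
    simp only [δ, hpartial, hφ.map_eq hG, map_add, map_sum, map_mul, AlgHom.commutes,
      Derivation.map_algebraMap, zero_add, Derivation.leibniz, smul_eq_mul, add_mul, Finset.sum_mul,
      Finset.sum_add_distrib, mul_sub, Finset.mul_sum, Finset.sum_sub_distrib]
    rw [Finset.sum_comm]
    ring_nf
  -- By Hadamard's lemma each use of `hδ` gains a factor `X`, so `δ` is infinitely divisible.
  have hdvd (n : ℕ) : ∀ F, PowerSeries.X ^ n ∣ δ F := by
    induction n with
    | zero => simp
    | succ n ih =>
      intro F
      obtain ⟨G, hG⟩ := hδ F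
      rw [hG, pow_succ']
      exact Finset.dvd_sum fun i _ ↦ mul_dvd_mul (hX i) (ih (G i))
  rw [← sub_eq_zero]
  ext n
  exact PowerSeries.X_pow_dvd_iff.1 (hdvd (n + 1) F) n n.lt_succ_self

end IsFormalCurve

end FormalCurve

/-! ### Orders along a formal curve -/

theorem exists_X_mul_derivative_eq_mul {k : Type*} [Field k] {y : k⟦X⟧} (hy : y ≠ 0) :
    ∃ e : k⟦X⟧, PowerSeries.X * PowerSeries.derivative k y = y * e ∧
      e.constantCoeff = y.order.toNat := by
  obtain ⟨m, hm⟩ : ∃ m : ℕ, y.order.toNat = m := ⟨_, rfl⟩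
  obtain ⟨v, hv⟩ : ∃ v, y = PowerSeries.X ^ m * v := hm ▸ PowerSeries.X_pow_order_dvd
  have hv₀ : v.constantCoeff ≠ 0 := by
    have hcoeff := PowerSeries.coeff_order hy
    rw [hm, hv, PowerSeries.coeff_X_pow_mul'] at hcoeff
    simpa using hcoeff
  refine ⟨(m : k⟦X⟧) + PowerSeries.X * PowerSeries.derivative k v * v⁻¹, ?_, by simp [hm]⟩
  have hinv : v * v⁻¹ = 1 := PowerSeries.mul_inv_cancel v hv₀
  have hpow : PowerSeries.X * PowerSeries.derivative k (PowerSeries.X ^ m) =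
      (m : k⟦X⟧) * PowerSeries.X ^ m := by
    rw [Derivation.leibniz_pow, PowerSeries.derivative_X]
    cases m <;> simp [pow_succ', mul_left_comm]
  rw [hv, Derivation.leibniz, smul_eq_mul, smul_eq_mul]
  linear_combination v * hpow -
    PowerSeries.X ^ m * PowerSeries.X * PowerSeries.derivative k v * hinv

theorem norm_lt_one_of_one_add_mul_eq {c : ℂ} {m β : ℝ} (hm : 0 < m) (hβ : 0 < β)
    (h : (1 + c) * m = (1 - c) * β) : ‖c‖ < 1 := by
  have hc : c = ((β - m) / (β + m) : ℝ) := by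
    push_cast
    rw [eq_div_iff (by exact_mod_cast (add_pos hβ hm).ne')]
    linear_combination h
  rw [hc, Complex.norm_real, Real.norm_eq_abs, abs_lt, lt_div_iff₀ (by positivity),
    div_lt_one (by positivity)]
  constructor <;> linarith

theorem norm_constantCoeff_lt_one {ι : Type*} [Fintype ι] {T G C : ℂ⟦X⟧} {U W : ι → ℂ⟦X⟧}
    (hT : T ≠ 0) (hG : G ≠ 0) (hT₀ : T.constantCoeff = 0) (hG₀ : G.constantCoeff = 0)
    (hWU : (∑ j, W j * U j).constantCoeff = 1)
    (hrel : (1 + C) * T * PowerSeries.derivative ℂ G =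
      (1 - C) * G * ∑ j, W j * PowerSeries.derivative ℂ (T * U j)) :
    ‖C.constantCoeff‖ < 1 := by
  have horder {y : ℂ⟦X⟧} (hy : y ≠ 0) (hy₀ : y.constantCoeff = 0) :
      0 < (y.order.toNat : ℝ) := by
    rw [Nat.cast_pos, Nat.pos_iff_ne_zero, ← Nat.cast_ne_zero (R := ℕ∞),
      PowerSeries.coe_toNat_order hy]
    exact PowerSeries.order_ne_zero_iff_constCoeff_eq_zero.2 hy₀
  obtain ⟨s, hs, hs₀⟩ := exists_X_mul_derivative_eq_mul hT
  obtain ⟨t, ht, ht₀⟩ := exists_X_mul_derivative_eq_mul hG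
  have hcancel : (1 + C) * t = (1 - C) * (s * ∑ j, W j * U j +
      PowerSeries.X * ∑ j, W j * PowerSeries.derivative ℂ (U j)) := by
    refine mul_left_cancel₀ (mul_ne_zero hT hG) ?_
    calc T * G * ((1 + C) * t)
        = PowerSeries.X * ((1 + C) * T * PowerSeries.derivative ℂ G) := by
          linear_combination (-(1 + C) * T) * ht
      _ = (1 - C) * G * ∑ j, W j * (PowerSeries.X * PowerSeries.derivative ℂ (T * U j)) := by
          rw [hrel]
          simp only [Finset.mul_sum]
          exact Finset.sum_congr rfl fun j _ ↦ by ring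
      _ = (1 - C) * G * ∑ j, W j *
            (T * s * U j + T * (PowerSeries.X * PowerSeries.derivative ℂ (U j))) := by
          congr! 3 with j
          rw [Derivation.leibniz, smul_eq_mul, smul_eq_mul]
          linear_combination U j * hs
      _ = _ := by
          simp only [Finset.mul_sum, ← Finset.sum_add_distrib]
          exact Finset.sum_congr rfl fun j _ ↦ by ring
  have hconst := congrArg PowerSeries.constantCoeff hcancel
  simp only [map_mul, map_add, map_sub, map_one, hs₀, ht₀, hWU, PowerSeries.constantCoeff_X,
    zero_mul, add_zero, mul_one] at hconst
  exact norm_lt_one_of_one_add_mul_eq (horder hG hG₀) (horder hT hT₀) (by exact_mod_cast hconst)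

section PolarSpace

open holomorphicAt

/-- The space of tuples `(τ, u, w, c)`, standing for a point `τ • u` in polar coordinates, the
functional `w = ⟪u, ·⟫` and a phase `c`. The functional is an independent coordinate because
`⟪u, ·⟫` does not depend holomorphically on `u`. -/
abbrev PolarSpace (E : Type*) [NormedAddCommGroup E] [NormedSpace ℂ E] : Type _ :=
  ℂ × E × (E →L[ℂ] ℂ) × ℂ

namespace PolarSpace

variable {E : Type*} [NormedAddCommGroup E] [NormedSpace ℂ E]

/-- The coordinate `τ`. -/
noncomputable def radius (y : PolarSpace E) : holomorphicAt y := ofCLM y (.fst ℂ _ _)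

/-- The coordinate `l u` for a linear functional `l`. -/
noncomputable def direction (y : PolarSpace E) (l : E →L[ℂ] ℂ) : holomorphicAt y :=
  ofCLM y (l ∘L .fst ℂ _ _ ∘L .snd ℂ _ _)

/-- The coordinate `w v` for a vector `v`. -/
noncomputable def covector (y : PolarSpace E) (v : E) : holomorphicAt y :=
  ofCLM y (.apply ℂ ℂ v ∘L .fst ℂ _ _ ∘L .snd ℂ _ _ ∘L .snd ℂ _ _)

/-- The coordinate `c`. -/
noncomputable def phase (y : PolarSpace E) : holomorphicAt y :=
  ofCLM y (.snd ℂ _ _ ∘L .snd ℂ _ _ ∘L .snd ℂ _ _)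

/-- The pullback of functions along `(τ, u, w, c) ↦ τ • u`. -/
noncomputable def pullback (y : PolarSpace E) (hy : y.1 = 0) :
    holomorphicAt (0 : E) →ₐ[ℂ] holomorphicAt y :=
  comp (fun y ↦ y.1 • y.2.1) (.of_forall fun _ ↦ by fun_prop) (by simp [hy])

@[simp]
theorem radius_apply (y x : PolarSpace E) : radius y x = x.1 := rfl

@[simp]
theorem pullback_apply (y x : PolarSpace E) (hy : y.1 = 0) (F : holomorphicAt (0 : E)) :
    pullback y hy F x = F (x.1 • x.2.1) := rfl

variable [FiniteDimensional ℂ E]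

/-- The defect of the equation `(1 + c) τ DF(τ u) = (1 - c) F(τ u) w` in the direction `v`. -/
noncomputable def defect (y : PolarSpace E) (hy : y.1 = 0) (F : holomorphicAt (0 : E)) (v : E) :
    holomorphicAt y :=
  (1 + phase y) * radius y * pullback y hy (partialDeriv v F) -
    (1 - phase y) * pullback y hy F * covector y v

theorem defect_apply (y x : PolarSpace E) (hy : y.1 = 0) (F : holomorphicAt (0 : E)) (v : E) :
    defect y hy F v x = (1 + x.2.2.2) * x.1 * fderiv ℂ F (x.1 • x.2.1) v -
      (1 - x.2.2.2) * F (x.1 • x.2.1) * x.2.2.1 v := rfl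

theorem pullback_localCoord {ι : Type*} (b : Module.Basis ι ℂ E) (y : PolarSpace E)
    (hy : y.1 = 0) (j : ι) : pullback y hy (localCoord b 0 j) =
      radius y * direction y (b.coord j).toContinuousLinearMap := by
  ext x
  simp [pullback, localCoord, radius, direction, ofCLM]

theorem norm_lt_one_of_isFormalCurve {y : PolarSpace E} (hy : y.1 = 0) (hy' : y.2.2.1 y.2.1 = 1)
    {F : holomorphicAt (0 : E)} (hF : F 0 = 0) {φ : holomorphicAt y →ₐ[ℂ] ℂ⟦X⟧}
    (hφ : IsFormalCurve φ) (hradius : φ (radius y) ≠ 0) (hpullback : φ (pullback y hy F) ≠ 0)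
    (hdefect : ∀ v, φ (defect y hy F v) = 0) : ‖y.2.2.2‖ < 1 := by
  have hψ : IsFormalCurve (φ.comp (pullback y hy)) := hφ.comp _ _
  let b := Module.finBasis ℂ E
  have hphase : (φ (phase y)).constantCoeff = y.2.2.2 := hφ.constantCoeff_apply _
  rw [← hphase]
  refine norm_constantCoeff_lt_one hradius hpullback ((hφ.constantCoeff_apply _).trans hy)
    ((hψ.constantCoeff_apply F).trans hF)
    (U := fun j ↦ φ (direction y (b.coord j).toContinuousLinearMap))
    (W := fun j ↦ φ (covector y (b j))) ?_ ?_
  · simp only [map_sum, map_mul, hφ.constantCoeff_apply]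
    calc ∑ j, y.2.2.1 (b j) * b.coord j y.2.1 = y.2.2.1 (∑ j, b.repr y.2.1 j • b j) := by
          simp only [map_sum, map_smul, smul_eq_mul, b.coord_apply, mul_comm]
      _ = 1 := by rw [b.sum_repr, hy']
  · have hchain := hψ.derivative_apply b F
    simp only [AlgHom.comp_apply, pullback_localCoord, map_mul] at hchain
    rw [hchain, Finset.mul_sum, Finset.mul_sum]
    refine Finset.sum_congr rfl fun j _ ↦ ?_
    have hj := hdefect (b j)
    simp only [defect, map_sub, map_mul, map_add, map_one] at hj
    linear_combination PowerSeries.derivative ℂ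
      (φ (radius y) * φ (direction y (b.coord j).toContinuousLinearMap)) * hj

end PolarSpace
end PolarSpace

theorem exists_ultrafilter_of_frequently {α : Type*} {l : Filter α} {p : α → Prop}
    (h : ∃ᶠ x in l, p x) : ∃ 𝒰 : Ultrafilter α, (𝒰 : Filter α) ≤ l ∧ ∀ᶠ x : α in 𝒰, p x := by
  have : (l ⊓ 𝓟 {x | p x}).NeBot := frequently_mem_iff_neBot.1 h
  obtain ⟨hl, hp⟩ := le_inf_iff.1 (Ultrafilter.of_le (l ⊓ 𝓟 {x | p x}))
  exact ⟨_, hl, le_principal_iff.1 hp⟩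

section Regularity

open holomorphicAt PolarSpace ComplexConjugate InnerProductSpace

variable {E : Type*} [NormedAddCommGroup E] [InnerProductSpace ℂ E]

namespace PolarSpace

/-- The tuple representing the point `z` in polar coordinates, together with the phase `c`. -/
noncomputable def ofPoint (z : E) (c : ℂ) : PolarSpace E :=
  (‖z‖, (‖z‖⁻¹ : ℂ) • z, innerSL ℂ ((‖z‖⁻¹ : ℂ) • z), c)

theorem radius_smul_direction_ofPoint (z : E) (c : ℂ) :
    (ofPoint z c).1 • (ofPoint z c).2.1 = z := by
  rcases eq_or_ne z 0 with rfl | hz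
  · simp [ofPoint]
  · simp [ofPoint, smul_smul, hz]

theorem exists_tendsto_ofPoint [FiniteDimensional ℂ E] {𝒰 : Ultrafilter E}
    (h𝒰 : (𝒰 : Filter E) ≤ 𝓝 0) (hne : ∀ᶠ z : E in 𝒰, z ≠ 0) {c : E → ℂ}
    (hc : ∀ᶠ z : E in 𝒰, ‖c z‖ = 1) :
    ∃ y : PolarSpace E, y.1 = 0 ∧ y.2.2.1 y.2.1 = 1 ∧ ‖y.2.2.2‖ = 1 ∧
      Tendsto (fun z ↦ ofPoint z (c z)) 𝒰 (𝓝 y) := by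
  have : ProperSpace E := FiniteDimensional.proper ℂ E
  have hmem : (𝒰.map fun z ↦ ((‖z‖⁻¹ : ℂ) • z, c z) : Filter (E × ℂ)) ≤
      𝓟 (sphere 0 1 ×ˢ sphere 0 1) := by
    rw [Ultrafilter.coe_map, le_principal_iff, mem_map]
    filter_upwards [hne, hc] with z hz hcz
    simp [norm_smul, hz, hcz]
  obtain ⟨⟨u, c₀⟩, ⟨hu, hc₀⟩, hlim⟩ :=
    ((isCompact_sphere (0 : E) 1).prod (isCompact_sphere (0 : ℂ) 1)).ultrafilter_le_nhds _ hmem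
  have hlim' : Tendsto (fun z ↦ ((‖z‖⁻¹ : ℂ) • z, c z)) 𝒰 (𝓝 (u, c₀)) := hlim
  rw [nhds_prod_eq, tendsto_prod_iff'] at hlim'
  obtain ⟨hlimu, hlimc⟩ := hlim'
  rw [mem_sphere_zero_iff_norm] at hu hc₀
  refine ⟨(0, u, innerSL ℂ u, c₀), rfl, by simp [inner_self_eq_norm_sq_to_K, hu], hc₀, ?_⟩
  have hnorm : Tendsto (fun z : E ↦ (‖z‖ : ℂ)) 𝒰 (𝓝 0) := by
    have : Continuous fun z : E ↦ (‖z‖ : ℂ) := by fun_prop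
    simpa using (this.tendsto 0).mono_left h𝒰
  exact hnorm.prodMk_nhds <| hlimu.prodMk_nhds <|
    (((innerSL ℂ).continuous.tendsto u).comp hlimu).prodMk_nhds hlimc

end PolarSpace

theorem exists_real_fderiv_eq_smul_innerSL [CompleteSpace E] {f : E → ℂ} {z : E} (hz : z ≠ 0)
    (hfz : f z ≠ 0)
    (h : ¬ LinearIndependent ℝ ![z, Complex.I • (conj (f z))⁻¹ • gradient f z]) :
    ∃ a : ℝ, fderiv ℂ f z = (Complex.I * a * f z) • innerSL ℂ z := by
  rw [LinearIndependent.pair_iff' hz] at h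
  push Not at h
  obtain ⟨a, ha⟩ := h
  have hgrad : gradient f z = (-Complex.I * a * conj (f z)) • z := by
    have hconj : conj (f z) ≠ 0 := (map_ne_zero _).2 hfz
    rw [← Complex.coe_smul] at ha
    rw [mul_right_comm, mul_smul, ha, smul_smul, smul_smul]
    have : -Complex.I * conj (f z) * Complex.I * (conj (f z))⁻¹ = 1 := by
      field_simp
      rw [Complex.I_sq, neg_neg]
    rw [this, one_smul]
  refine ⟨a, ?_⟩
  ext v
  rw [← toDual_symm_apply (𝕜 := ℂ) (y := fderiv ℂ f z)]
  change inner ℂ (gradient f z) v = _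
  simp [hgrad, inner_smul_left]

/-- The equation which a complex number `c` of modulus one satisfies at a point `z` where `z` and
`i • grad log f z` are dependent over the reals. -/
def IsPhase (f : E → ℂ) (z : E) (c : ℂ) : Prop :=
  ‖c‖ = 1 ∧ ∀ v, (1 + c) * ‖z‖ * fderiv ℂ f z v =
    (1 - c) * f z * innerSL ℂ ((‖z‖⁻¹ : ℂ) • z) v

theorem exists_isPhase {f : E → ℂ} {z : E} {a : ℝ}
    (h : fderiv ℂ f z = (Complex.I * a * f z) • innerSL ℂ z) : ∃ c, IsPhase f z c := by
  rcases eq_or_ne z 0 with rfl | hz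
  · exact ⟨1, by simp, by simp⟩
  obtain ⟨b, hb⟩ : ∃ b : ℝ, (b : ℂ) = a * ‖z‖ ^ 2 := ⟨a * ‖z‖ ^ 2, by push_cast; rfl⟩
  let ζ : ℂ := 1 + Complex.I * b
  have hζ : ζ ≠ 0 := fun h0 ↦ by simpa [ζ] using congrArg Complex.re h0
  have hznorm : (‖z‖ : ℂ) ≠ 0 := by simpa using hz
  refine ⟨conj ζ / ζ, by simp [hζ], fun v ↦ ?_⟩
  have hconj : conj ζ = 2 - ζ := by
    simp only [ζ, map_add, map_mul, map_one, Complex.conj_I, Complex.conj_ofReal]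
    ring
  have hscale : innerSL ℂ z v = ‖z‖ * innerSL ℂ ((‖z‖⁻¹ : ℂ) • z) v := by
    simp [hznorm]
  rw [h, smul_apply, smul_eq_mul, hscale, hconj]
  generalize innerSL ℂ ((‖z‖⁻¹ : ℂ) • z) v = q
  field_simp
  linear_combination (2 * Complex.I * f z * q) * -hb

theorem not_frequently_isPhase [FiniteDimensional ℂ E] {f : E → ℂ}
    (hf : ∀ᶠ x in 𝓝 0, DifferentiableAt ℂ f x) (hf0 : f 0 = 0) :
    ¬ ∃ᶠ z in 𝓝 0, f z ≠ 0 ∧ ∃ c, IsPhase f z c := by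
  intro hfreq
  obtain ⟨𝒰, h𝒰, hphase⟩ := exists_ultrafilter_of_frequently hfreq
  obtain ⟨hfne, hphase⟩ := eventually_and.1 hphase
  obtain ⟨c, hc⟩ := hphase.choice
  have hne : ∀ᶠ z : E in 𝒰, z ≠ 0 := hfne.mono fun z hfz hz ↦ hfz (hz ▸ hf0)
  obtain ⟨y, hy, hunit, hnorm, hlim⟩ := exists_tendsto_ofPoint h𝒰 hne (hc.mono fun _ h ↦ h.1)
  let F : holomorphicAt (0 : E) := ⟨f, hf⟩
  let 𝒱 : Ultrafilter (PolarSpace E) := 𝒰.map fun z ↦ ofPoint z (c z)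
  have hdefect (v : E) : defect y hy F v ∈ vanishingIdeal y 𝒱 := by
    rw [mem_vanishingIdeal, Ultrafilter.coe_map, eventually_map]
    filter_upwards [hc] with z hz
    rw [defect_apply, radius_smul_direction_ofPoint]
    exact sub_eq_zero.2 (hz.2 v)
  have hprod : radius y * pullback y hy F ∉ vanishingIdeal y 𝒱 := by
    rw [mem_vanishingIdeal, Ultrafilter.coe_map, eventually_map, ← Ultrafilter.eventually_not]
    filter_upwards [hfne, hne] with z hfz hz
    refine mul_ne_zero (by simpa [ofPoint] using hz) ?_
    rwa [pullback_apply, radius_smul_direction_ofPoint]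
  obtain ⟨φ, hker, hφ⟩ := hasFormalCurves_of_le_nhds (𝒰 := 𝒱) hlim _ hprod
  rw [map_mul] at hφ
  have hcurve : IsFormalCurve φ := fun G hG ↦ hker (hlim hG)
  exact (norm_lt_one_of_isFormalCurve hy hunit (F := F) hf0 hcurve (left_ne_zero_of_mul hφ)
    (right_ne_zero_of_mul hφ) fun v ↦ hker (hdefect v)).ne hnorm

theorem stmt_13_general [FiniteDimensional ℂ E] [CompleteSpace E] {f : E → ℂ}
    (hf : ∀ᶠ x in 𝓝 0, DifferentiableAt ℂ f x) (hf0 : f 0 = 0) : ∀ᶠ z in 𝓝 0, f z ≠ 0 →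
      LinearIndependent ℝ ![z, Complex.I • (conj (f z))⁻¹ • gradient f z] := by
  by_contra hfreq
  refine not_frequently_isPhase hf hf0 ((not_eventually.1 hfreq).mono fun z hz ↦ ?_)
  obtain ⟨hfz, hdep⟩ := Classical.not_imp.1 hz
  have hz0 : z ≠ 0 := fun h ↦ hfz (h ▸ hf0)
  obtain ⟨a, ha⟩ := exists_real_fderiv_eq_smul_innerSL hz0 hfz hdep
  exact ⟨hfz, exists_isPhase ha⟩

end Regularity

theorem stmt_13 (n : ℕ) (hn : 1 ≤ n)
    (U : Set (EuclideanSpace ℂ (Fin n))) (hU : IsOpen U)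
    (h0U : (0 : EuclideanSpace ℂ (Fin n)) ∈ U)
    (f : EuclideanSpace ℂ (Fin n) → ℂ) (hf : DifferentiableOn ℂ f U) (hf0 : f 0 = 0) :
    ∃ ε₀ > (0 : ℝ), ∀ z ∈ U, 0 < ‖z‖ → ‖z‖ ≤ ε₀ → f z ≠ 0 →
      LinearIndependent ℝ ![z, Complex.I • gradLog f z] := by
  obtain ⟨ε₀, hε₀, h⟩ := nhds_basis_closedBall.eventually_iff.1 <|
    stmt_13_general (hf.eventually_differentiableAt (hU.mem_nhds h0U)) hf0
  exact ⟨ε₀, hε₀, fun z _ _ hz ↦ h (mem_closedBall_zero_iff.2 hz)⟩
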